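/- arXiv:2406.20069 — 6 statements merged into one kernel-verified Lean document; each statement's English description precedes it below -/
import Mathlib

section
/- For every real X with 0.6 ≤ X ≤ 0.75 and every θ ∈ [2π/3, π], we have (π − θ)·X − cos θ + 1 ≤ X·arcsin X + cos(arcsin X) + 1; that is, on the interval [2π/3, π] the function θ ↦ (π − θ)X − cos θ + 1 is maximized at θ = π − arcsin X. -/
open Real

/-!
The substitution `u = π - θ` turns `(π - θ) X - cos θ` into `u X + cos u`. With `a = arcsin X`, the
slope of the cosine at `a` is `-sin a = -X`, so the claim says that on `[-π/2, π/2]`, where the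
cosine is concave, its graph lies below its tangent at `a`.
-/

theorem le_tangent_of_concaveOn {s : Set ℝ} {f : ℝ → ℝ} {f' x y : ℝ} (hf : ConcaveOn ℝ s f)
    (hx : x ∈ s) (hy : y ∈ s) (hf' : HasDerivWithinAt f f' s x) :
    f y ≤ f x + f' * (y - x) := by
  rcases lt_trichotomy y x with hyx | rfl | hxy
  · have hslope : f' ≤ slope f y x := hf.le_slope_of_hasDerivWithinAt hy hx hyx hf'
    rw [slope_def_field, le_div_iff₀ (sub_pos.2 hyx)] at hslope
    linarith
  · simp
  · have hslope : slope f x y ≤ f' := hf.slope_le_of_hasDerivWithinAt hx hy hxy hf'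
    rw [slope_def_field, div_le_iff₀ (sub_pos.2 hxy)] at hslope
    linarith

theorem cos_le_cos_sub_sin_mul_sub {a u : ℝ} (ha : a ∈ Set.Icc (-(π / 2)) (π / 2))
    (hu : u ∈ Set.Icc (-(π / 2)) (π / 2)) : cos u ≤ cos a - sin a * (u - a) := by
  simpa only [neg_mul, ← sub_eq_add_neg] using
    le_tangent_of_concaveOn strictConcaveOn_cos_Icc.concaveOn ha hu
      (hasDerivAt_cos a).hasDerivWithinAt

theorem stmt_3_general {X θ : ℝ} (hX : X ∈ Set.Icc (-1 : ℝ) 1)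
    (hθ : θ ∈ Set.Icc (π / 2) (3 * π / 2)) :
    (π - θ) * X - cos θ + 1 ≤ X * arcsin X + cos (arcsin X) + 1 := by
  have hu : π - θ ∈ Set.Icc (-(π / 2)) (π / 2) := ⟨by linarith [hθ.2], by linarith [hθ.1]⟩
  have htangent := cos_le_cos_sub_sin_mul_sub (arcsin_mem_Icc X) hu
  rw [cos_pi_sub, sin_arcsin' hX] at htangent
  linarith

/-- For every real `X ∈ [0.6, 0.75]` and every `θ ∈ [2π/3, π]`,
`(π − θ)·X − cos θ + 1 ≤ X·arcsin X + cos (arcsin X) + 1`; i.e. on `[2π/3, π]`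
the function `θ ↦ (π − θ)X − cos θ + 1` is maximized at `θ = π − arcsin X`. -/
theorem stmt_3 (X : ℝ) (hX : X ∈ Set.Icc (0.6 : ℝ) 0.75)
    (θ : ℝ) (hθ : θ ∈ Set.Icc (2 * π / 3) π) :
    (π - θ) * X - Real.cos θ + 1 ≤
      X * Real.arcsin X + Real.cos (Real.arcsin X) + 1 :=
  stmt_3_general (Set.Icc_subset_Icc (by norm_num) (by norm_num) hX)
    (Set.Icc_subset_Icc (by linarith [pi_pos]) (by linarith [pi_pos]) hθ)
end

section
/- Consider the complete graph on the five vertices {0, a, x, y, z} with vertex weights w(a) = 2 and w(0) = w(x) = w(y) = w(z) = 1, and edge weights w(i,j) = w(i)·w(j). Every triangle-free subgraph of this graph has total edge weight at most 9. -/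
/-- The vertex weight on the five vertices `{0, a, x, y, z}`, encoded as `Fin 5` with
`0 ↦ 0`, `1 ↦ a`, `2 ↦ x`, `3 ↦ y`, `4 ↦ z`: the vertex `a` has weight `2`, all others
weight `1`. -/
def w5 : Fin 5 → ℕ := fun i => if i = 1 then 2 else 1

/-!
This is a weighted form of Mantel's theorem: if `W` is the total vertex weight, a triangle-free
graph has edge weight at most `W ^ 2 / 4`, and here `W = 6`. In a triangle-free graph the
neighbours of a vertex `v` form an independent set, so the non-neighbours of `v` cover all edges.
If `v` has maximal weighted degree `Δ`, the non-neighbours have total weight `W - Δ`, and each of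
them meets edges worth at most `Δ` times its own weight; so the edge weight is at most
`(W - Δ) * Δ ≤ W ^ 2 / 4`.
-/

open Finset

section VertexWeights

variable {V R : Type*} [CommSemiring R] (G : SimpleGraph V) (w : V → R)

/-- The total edge weight of `G` when an edge `s(u, v)` has weight `w u * w v`. -/
def totalEdgeWeight [Fintype G.edgeSet] : R :=
  ∑ e ∈ G.edgeFinset, (e.map w).mul

/-- The weighted degree of `v`: the total vertex weight of its neighbours. -/
def weightedDegree (v : V) [Fintype (G.neighborSet v)] : R :=
  ∑ u ∈ G.neighborFinset v, w u

theorem sum_incidenceFinset_mul_eq_mul_weightedDegree [DecidableEq V] (v : V)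
    [Fintype (G.neighborSet v)] :
    ∑ e ∈ G.incidenceFinset v, (e.map w).mul = w v * weightedDegree G w v := by
  have incidence_eq_image : G.incidenceFinset v = (G.neighborFinset v).image (s(v, ·)) := by
    ext e
    induction e with | _ a b
    simp only [SimpleGraph.mem_incidenceFinset, SimpleGraph.mk'_mem_incidenceSet_iff, mem_image,
      SimpleGraph.mem_neighborFinset, Sym2.eq_iff]
    grind [G.adj_comm]
  rw [incidence_eq_image, sum_image fun _ _ _ _ ↦ Sym2.congr_right.mp, weightedDegree, mul_sum]
  rfl

theorem totalEdgeWeight_eq_sum_lt [Fintype V] [LinearOrder V] [DecidableRel G.Adj] :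
    totalEdgeWeight G w =
      ∑ q ∈ univ.filter (fun q : V × V ↦ q.1 < q.2 ∧ G.Adj q.1 q.2), w q.1 * w q.2 := by
  have edgeFinset_eq : G.edgeFinset =
      (univ.sym2.filter fun e : Sym2 V ↦ ¬ e.IsDiag).filter (· ∈ G.edgeSet) := by
    ext e
    simpa using G.not_isDiag_of_mem_edgeSet
  rw [totalEdgeWeight, edgeFinset_eq, sum_filter, sum_sym2_filter_not_isDiag, ← sum_filter]
  refine sum_congr ?_ fun _ _ ↦ rfl
  ext q
  simpa using fun lt _ ↦ lt.ne

end VertexWeights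

theorem sum_edgeFinset_le_sum_incidenceFinset_of_isVertexCover {V M : Type*}
    [AddCommMonoid M] [PartialOrder M] [IsOrderedAddMonoid M] [DecidableEq V]
    {G : SimpleGraph V} [Fintype G.edgeSet] [G.LocallyFinite] {C : Finset V}
    (hC : G.IsVertexCover C) {f : Sym2 V → M} (hf : ∀ e ∈ G.edgeFinset, 0 ≤ f e) :
    ∑ e ∈ G.edgeFinset, f e ≤ ∑ v ∈ C, ∑ e ∈ G.incidenceFinset v, f e := by
  have exists_mem_cover : ∀ e ∈ G.edgeFinset, ∃ v ∈ C, v ∈ e := by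
    intro e he
    induction e with | _ a b
    rcases hC (SimpleGraph.mem_edgeFinset.mp he) with ha | hb
    · exact ⟨a, ha, Sym2.mem_mk_left a b⟩
    · exact ⟨b, hb, Sym2.mem_mk_right a b⟩
  calc ∑ e ∈ G.edgeFinset, f e
      ≤ ∑ e ∈ G.edgeFinset, ∑ v ∈ C with v ∈ e, f e := by
        refine sum_le_sum fun e he ↦ ?_
        obtain ⟨v, hv, hve⟩ := exists_mem_cover e he
        exact single_le_sum (f := fun _ ↦ f e) (fun _ _ ↦ hf e he) (mem_filter.mpr ⟨hv, hve⟩)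
    _ = ∑ v ∈ C, ∑ e ∈ G.incidenceFinset v, f e := by
        simp only [SimpleGraph.incidenceFinset_eq_filter, sum_filter]
        exact sum_comm

theorem totalEdgeWeight_le_sum_mul_weightedDegree_of_isVertexCover {V R : Type*} [CommSemiring R]
    [PartialOrder R] [IsOrderedRing R] {G : SimpleGraph V} [Fintype G.edgeSet] [G.LocallyFinite]
    {w : V → R} (hw : ∀ v, 0 ≤ w v) {C : Finset V} (hC : G.IsVertexCover C) :
    totalEdgeWeight G w ≤ ∑ v ∈ C, w v * weightedDegree G w v := by
  classical
  have edge_weight_nonneg (e : Sym2 V) : 0 ≤ (e.map w).mul := by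
    induction e with | _ a b
    exact mul_nonneg (hw a) (hw b)
  simp_rw [← sum_incidenceFinset_mul_eq_mul_weightedDegree]
  exact sum_edgeFinset_le_sum_incidenceFinset_of_isVertexCover hC
    fun e _ ↦ edge_weight_nonneg e

theorem four_mul_totalEdgeWeight_le_sq_of_cliqueFree_three {V R : Type*} [Fintype V]
    [CommSemiring R] [LinearOrder R] [IsStrictOrderedRing R] [ExistsAddOfLE R]
    {G : SimpleGraph V} [DecidableRel G.Adj] {w : V → R}
    (hG : G.CliqueFree 3) (hw : ∀ v, 0 ≤ w v) :
    4 * totalEdgeWeight G w ≤ (∑ v, w v) ^ 2 := by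
  classical
  cases isEmpty_or_nonempty V
  · simp [totalEdgeWeight, SimpleGraph.edgeFinset_eq_empty.mpr (Subsingleton.elim G ⊥)]
  obtain ⟨v, weightedDegree_le⟩ := Finite.exists_max (fun u ↦ weightedDegree G w u)
  have nonNeighbors_cover : G.IsVertexCover ((G.neighborFinset v)ᶜ : Finset V) := by
    rw [coe_compl, SimpleGraph.coe_neighborFinset, SimpleGraph.isVertexCover_compl]
    exact G.isIndepSet_neighborSet_of_triangleFree hG v
  calc 4 * totalEdgeWeight G w
      ≤ 4 * ∑ u ∈ (G.neighborFinset v)ᶜ, w u * weightedDegree G w u := by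
        gcongr
        exact totalEdgeWeight_le_sum_mul_weightedDegree_of_isVertexCover hw nonNeighbors_cover
    _ ≤ 4 * ∑ u ∈ (G.neighborFinset v)ᶜ, w u * weightedDegree G w v := by
        gcongr with u
        · exact hw u
        · exact weightedDegree_le u
    _ = 4 * (∑ u ∈ (G.neighborFinset v)ᶜ, w u) * weightedDegree G w v := by
        rw [← sum_mul, mul_assoc]
    _ ≤ (∑ u ∈ (G.neighborFinset v)ᶜ, w u + weightedDegree G w v) ^ 2 := four_mul_le_sq_add _ _
    _ = (∑ u, w u) ^ 2 := by rw [weightedDegree, sum_compl_add_sum]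

theorem stmt_9_general {V R : Type*} [Fintype V] [LinearOrder V] [CommSemiring R] [LinearOrder R]
    [IsStrictOrderedRing R] [ExistsAddOfLE R] {H : SimpleGraph V} [DecidableRel H.Adj]
    (htf : H.CliqueFree 3) {w : V → R} (hw : ∀ v, 0 ≤ w v) :
    4 * ∑ q ∈ univ.filter (fun q : V × V ↦ q.1 < q.2 ∧ H.Adj q.1 q.2), w q.1 * w q.2 ≤
      (∑ v, w v) ^ 2 := by
  rw [← totalEdgeWeight_eq_sum_lt]
  exact four_mul_totalEdgeWeight_le_sq_of_cliqueFree_three htf hw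

/-- Every triangle-free subgraph of the complete graph on `{0, a, x, y, z}` with edge
weights `w(i)·w(j)` has total edge weight at most `9`. -/
theorem stmt_9 (H : SimpleGraph (Fin 5)) [DecidableRel H.Adj] (htf : H.CliqueFree 3) :
    ∑ q ∈ Finset.univ.filter (fun q : Fin 5 × Fin 5 => q.1 < q.2 ∧ H.Adj q.1 q.2),
      w5 q.1 * w5 q.2 ≤ 9 := by
  have sum_w5 : ∑ v, w5 v = 6 := rfl
  linarith [sum_w5 ▸ stmt_9_general htf fun v ↦ (w5 v).zero_le]
end

section
/- Consider the complete graph on the six vertices {0, 1, a, x, y, z} with vertex weights w(a) = w(1) = 2 and w(0) = w(x) = w(y) = w(z) = 1, and edge weights w(i,j) = w(i)·w(j) + δ(i,j) where δ(i,j) = 1 if {i,j} = {0,1} and δ(i,j) = 0 otherwise. Every triangle-free subgraph of this graph has total edge weight at most 17. -/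
/-- The vertex weight on the six vertices `{0, 1, a, x, y, z}`, encoded as `Fin 6` with
`0 ↦ 0`, `1 ↦ 1`, `2 ↦ a`, `3 ↦ x`, `4 ↦ y`, `5 ↦ z`: the vertices `a` and `1` have
weight `2`, all others weight `1`. -/
def w6 : Fin 6 → ℕ := fun i => if i = 1 ∨ i = 2 then 2 else 1

/-- Edge weight `w(i)·w(j) + δ(i,j)`, where `δ` is `1` on the pair `{0, 1}` and `0`
elsewhere. -/
def ew6 : Fin 6 → Fin 6 → ℕ := fun i j =>
  w6 i * w6 j + (if (i = 0 ∧ j = 1) ∨ (i = 1 ∧ j = 0) then 1 else 0)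

/-!
Mantel's theorem holds with vertex weights: if a graph is triangle-free and `w ≥ 0`, then
`4 ∑ w i * w j ≤ (∑ w i) ^ 2`, the first sum being over the edges. Indeed, let `v` maximise the
weight `d` of its neighbourhood. The neighbourhood is independent, so its complement, of weight `c`,
meets every edge, and charging each edge to an end in the complement bounds the edge sum by
`c * d`, hence by `(c + d) ^ 2 / 4`. Here the total vertex weight is `8`, and `δ` adds at most `1`
to the resulting `16`.
-/

section EdgeSums

variable {V M : Type*} {G : SimpleGraph V}

theorem sum_edgeFinset_eq_sum_filter_lt [Fintype V] [LinearOrder V] [DecidableRel G.Adj]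
    [AddCommMonoid M] (f : Sym2 V → M) :
    ∑ e ∈ G.edgeFinset, f e =
      ∑ q : V × V with q.1 < q.2 ∧ G.Adj q.1 q.2, f s(q.1, q.2) := by
  symm
  refine Finset.sum_nbij (fun q ↦ s(q.1, q.2)) (by simp) ?injective ?surjective fun _ _ ↦ rfl
  case injective =>
    rintro ⟨i, j⟩ hij ⟨k, l⟩ hkl h
    simp only [Finset.coe_filter, Finset.mem_univ, true_and, Set.mem_ofPred_eq] at hij hkl
    grind
  case surjective =>
    rintro ⟨i, j⟩ he
    have hij : G.Adj i j := by simpa using he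
    rcases hij.ne.lt_or_gt with h | h
    · exact ⟨(i, j), by simp [h, hij], rfl⟩
    · exact ⟨(j, i), by simp [h, hij.symm], Sym2.eq_swap⟩

theorem sum_incidenceFinset_eq_sum_neighborFinset [DecidableEq V] [AddCommMonoid M]
    (f : Sym2 V → M) (v : V) [Fintype (G.neighborSet v)] :
    ∑ e ∈ G.incidenceFinset v, f e = ∑ u ∈ G.neighborFinset v, f s(v, u) := by
  symm
  refine Finset.sum_nbij (fun u ↦ s(v, u)) (by simp) ?injective ?surjective fun _ _ ↦ rfl
  case injective => exact fun _ _ _ _ h ↦ Sym2.congr_right.1 h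
  case surjective =>
    intro e he
    have he' : e ∈ G.incidenceSet v := by simpa using he
    obtain ⟨u, rfl⟩ : v ∈ e := he'.2
    exact ⟨u, by simpa using he', rfl⟩

theorem sum_edgeFinset_le_sum_of_isVertexCover [Fintype G.edgeSet] [G.LocallyFinite]
    [AddCommMonoid M] [PartialOrder M] [IsOrderedAddMonoid M] {C : Finset V}
    (hC : G.IsVertexCover C) {f : Sym2 V → M} (hf : ∀ e ∈ G.edgeSet, 0 ≤ f e) :
    ∑ e ∈ G.edgeFinset, f e ≤ ∑ v ∈ C, ∑ u ∈ G.neighborFinset v, f s(v, u) := by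
  classical
  have exists_end_mem : ∀ e ∈ G.edgeSet, ∃ v ∈ C, v ∈ e := by
    rintro ⟨i, j⟩ he
    rcases hC he with h | h
    · exact ⟨i, h, Sym2.mem_mk_left i j⟩
    · exact ⟨j, h, Sym2.mem_mk_right i j⟩
  calc ∑ e ∈ G.edgeFinset, f e
    _ ≤ ∑ e ∈ G.edgeFinset, ∑ v ∈ C with v ∈ e, f e := by
      refine Finset.sum_le_sum fun e he ↦ ?_
      rw [SimpleGraph.mem_edgeFinset] at he
      obtain ⟨v, hvC, hve⟩ := exists_end_mem e he
      exact Finset.single_le_sum (f := fun _ ↦ f e) (fun _ _ ↦ hf e he)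
        (Finset.mem_filter.2 ⟨hvC, hve⟩)
    _ = ∑ v ∈ C, ∑ e ∈ G.incidenceFinset v, f e := Finset.sum_comm' fun e v ↦ by
      rw [SimpleGraph.incidenceFinset_eq_filter, Finset.mem_filter, Finset.mem_filter]
      tauto
    _ = ∑ v ∈ C, ∑ u ∈ G.neighborFinset v, f s(v, u) := by
      simp only [sum_incidenceFinset_eq_sum_neighborFinset]

theorem four_mul_sum_edgeFinset_mul_le_sq_sum_of_cliqueFree_three [Fintype V]
    [DecidableRel G.Adj] [CommSemiring M] [LinearOrder M] [IsStrictOrderedRing M]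
    [ExistsAddOfLE M] (hG : G.CliqueFree 3) {w : V → M} (hw : 0 ≤ w) :
    4 * ∑ e ∈ G.edgeFinset, (e.map w).mul ≤ (∑ v, w v) ^ 2 := by
  classical
  cases isEmpty_or_nonempty V
  · simp [Finset.eq_empty_of_isEmpty G.edgeFinset]
  let d (v : V) : M := ∑ u ∈ G.neighborFinset v, w u
  obtain ⟨v, hv⟩ := Finite.exists_max d
  let C := (G.neighborFinset v)ᶜ
  have cover : G.IsVertexCover C := by
    simpa [C] using G.isIndepSet_neighborSet_of_triangleFree hG v
  have edge_nonneg (e : Sym2 V) : 0 ≤ (e.map w).mul := by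
    induction e with | h i j => exact mul_nonneg (hw i) (hw j)
  have sum_edges_le : ∑ e ∈ G.edgeFinset, (e.map w).mul ≤ (∑ u ∈ C, w u) * d v :=
    calc ∑ e ∈ G.edgeFinset, (e.map w).mul
      _ ≤ ∑ u ∈ C, ∑ t ∈ G.neighborFinset u, w u * w t :=
        sum_edgeFinset_le_sum_of_isVertexCover cover fun e _ ↦ edge_nonneg e
      _ = ∑ u ∈ C, w u * d u := by simp only [d, Finset.mul_sum]
      _ ≤ ∑ u ∈ C, w u * d v := by gcongr with u; exacts [hw u, hv u]
      _ = (∑ u ∈ C, w u) * d v := (Finset.sum_mul ..).symm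
  calc 4 * ∑ e ∈ G.edgeFinset, (e.map w).mul
    _ ≤ 4 * (∑ u ∈ C, w u) * d v := by rw [mul_assoc]; gcongr
    _ ≤ (∑ u ∈ C, w u + d v) ^ 2 := four_mul_le_sq_add _ _
    _ = (∑ u, w u) ^ 2 := by rw [Finset.sum_compl_add_sum]

end EdgeSums

theorem ew6_eq_mul_add_ite (i j : Fin 6) :
    ew6 i j = (s(i, j).map w6).mul + if s(i, j) = s(0, 1) then 1 else 0 := by
  simp [ew6]

/-- Every triangle-free subgraph of the complete graph on `{0, 1, a, x, y, z}` with edge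
weights `w(i)·w(j) + δ(i,j)` has total edge weight at most `17`. -/
theorem stmt_12 (H : SimpleGraph (Fin 6)) [DecidableRel H.Adj] (htf : H.CliqueFree 3) :
    ∑ q ∈ Finset.univ.filter (fun q : Fin 6 × Fin 6 => q.1 < q.2 ∧ H.Adj q.1 q.2),
      ew6 q.1 q.2 ≤ 17 := by
  have product_part : ∑ e ∈ H.edgeFinset, (e.map w6).mul ≤ 16 := by
    have total : ∑ i, w6 i = 8 := by decide
    have mantel :=
      four_mul_sum_edgeFinset_mul_le_sq_sum_of_cliqueFree_three htf (w := w6) zero_le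
    rw [total] at mantel
    lia
  have delta_part : ∑ e ∈ H.edgeFinset, (if e = s(0, 1) then 1 else 0) ≤ 1 := by
    rw [Finset.sum_ite_eq']
    split_ifs <;> simp
  simp only [ew6_eq_mul_add_ite]
  rw [← sum_edgeFinset_eq_sum_filter_lt fun e ↦ (e.map w6).mul + if e = s(0, 1) then 1 else 0,
    Finset.sum_add_distrib]
  exact add_le_add product_part delta_part
end

section
/- Fix α, β ∈ ℝ with α² + β² = 1, and let x₁, x₂, x₃, y₁, y₂, y₃ be independent standard normal random variables (i.e., distributed according to the product of six copies of the Gaussian measure on ℝ with mean 0 and variance 1). Then the probability of the event {x₁ ≥ x₂, x₁ ≥ x₃, αx₁ + βy₁ ≥ αx₂ + βy₂, αx₁ + βy₁ ≥ αx₃ + βy₃} equals P(α) = 1/9 + (arcsin α + arcsin(α/2))/(4π) + ((arcsin α)² − (arcsin(α/2))²)/(4π²). -/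
open MeasureTheory ProbabilityTheory Real

/-- `P(α) = 1/9 + (arcsin α + arcsin(α/2))/(4π) + ((arcsin α)² − (arcsin(α/2))²)/(4π²)`. -/
noncomputable def Pfun (α : ℝ) : ℝ :=
  1 / 9 + (Real.arcsin α + Real.arcsin (α / 2)) / (4 * π) +
    ((Real.arcsin α) ^ 2 - (Real.arcsin (α / 2)) ^ 2) / (4 * π ^ 2)

/-!
Projecting each triple onto the plane orthogonal to `(1, 1, 1)` turns the event into the statement
that two standard complex Gaussians `z` and `α z + β w` both lie in a sector of half-angle
`ψ = π / 3`. Write the second as `z u`. By rotation invariance of `z`, given `u` of argument `φ`,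
both points lie in the sector with probability `(2ψ - |φ|)₊ / (2π)`. The density of `φ` is the
second derivative of `(φ² - b²) / (4π)`, where `cos b = -α cos φ` with `b ∈ [0, π]`, so integrating
it against the triangle function `(2ψ - |φ|)₊` leaves a second difference of this primitive.
-/

open Set Filter Module
open scoped ENNReal InnerProductSpace Topology

section StandardGaussian

variable {F : Type*} [NormedAddCommGroup F] [InnerProductSpace ℝ F]

/-- The density `(2π)^(-n/2) exp(-‖x‖²/2)` of the standard Gaussian measure on an `n`-dimensional
Euclidean space. -/
noncomputable def stdGaussianPDFReal (x : F) : ℝ :=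
  (2 * π) ^ (-(finrank ℝ F / 2 : ℝ)) * exp (-‖x‖ ^ 2 / 2)

lemma stdGaussianPDFReal_nonneg (x : F) : 0 ≤ stdGaussianPDFReal x := by
  unfold stdGaussianPDFReal
  positivity

variable [MeasurableSpace F] [BorelSpace F]

@[fun_prop]
lemma measurable_stdGaussianPDFReal : Measurable (stdGaussianPDFReal (F := F)) := by
  unfold stdGaussianPDFReal
  fun_prop

variable [FiniteDimensional ℝ F]

lemma integrable_stdGaussianPDFReal : Integrable (stdGaussianPDFReal (F := F)) := by
  have h := (GaussianFourier.integrable_cexp_neg_mul_sq_norm_add (V := F) (b := 1 / 2)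
    (by norm_num) 0 0).norm.const_mul ((2 * π) ^ (-(finrank ℝ F / 2 : ℝ)))
  refine h.congr (.of_forall fun x => ?_)
  have hexp : (-(1 / 2) * ‖x‖ ^ 2 + 0 * ⟪(0 : F), x⟫_ℝ : ℂ) = (-‖x‖ ^ 2 / 2 : ℝ) := by
    push_cast; ring
  simp only [stdGaussianPDFReal, Complex.norm_exp, hexp, Complex.ofReal_re]

theorem charFun_withDensity_stdGaussianPDFReal (t : F) :
    charFun (volume.withDensity fun x => ENNReal.ofReal (stdGaussianPDFReal x)) t =
      Complex.exp (-‖t‖ ^ 2 / 2) := by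
  have hexp (x : F) : stdGaussianPDFReal x • Complex.exp (⟪x, t⟫_ℝ * Complex.I) =
      ((2 * π) ^ (-(finrank ℝ F / 2 : ℝ)) : ℝ) *
        Complex.exp (-(1 / 2) * ‖x‖ ^ 2 + Complex.I * ⟪t, x⟫_ℝ) := by
    rw [stdGaussianPDFReal, Complex.real_smul, Complex.exp_add, real_inner_comm]
    push_cast
    ring_nf
  have hconst : (π / (1 / 2) : ℂ) ^ (finrank ℝ F / 2 : ℂ) =
      ((2 * π) ^ (finrank ℝ F / 2 : ℝ) : ℝ) := by
    rw [Complex.ofReal_cpow (by positivity)]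
    push_cast
    ring_nf
  rw [charFun_apply, integral_withDensity_eq_integral_toReal_smul (by fun_prop) (by simp)]
  simp_rw [ENNReal.toReal_ofReal (stdGaussianPDFReal_nonneg _), hexp]
  rw [integral_const_mul, GaussianFourier.integral_cexp_neg_mul_sq_norm_add (by norm_num), hconst,
    ← mul_assoc, ← Complex.ofReal_mul, ← Real.rpow_add (by positivity), neg_add_cancel,
    Real.rpow_zero, Complex.ofReal_one, one_mul, Complex.I_sq]
  ring_nf

theorem stdGaussian_eq_withDensity :
    stdGaussian F = volume.withDensity fun x => ENNReal.ofReal (stdGaussianPDFReal x) := by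
  have := isFiniteMeasure_withDensity_ofReal (integrable_stdGaussianPDFReal (F := F)).2
  exact Measure.ext_of_charFun <| funext fun t => by
    rw [charFun_stdGaussian, charFun_withDensity_stdGaussianPDFReal]

lemma lintegral_stdGaussian (f : F → ℝ≥0∞) :
    ∫⁻ x, f x ∂stdGaussian F = ∫⁻ x, ENNReal.ofReal (stdGaussianPDFReal x) * f x := by
  rw [stdGaussian_eq_withDensity, lintegral_withDensity_eq_lintegral_mul_non_measurable _
    (by fun_prop) (.of_forall fun _ => ENNReal.ofReal_lt_top)]
  rfl

theorem measurePreserving_sum_smul_of_parseval {ι : Type*} [Fintype ι] {c : ι → F}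
    (hc : ∀ t, ∑ i, ⟪c i, t⟫_ℝ ^ 2 = ‖t‖ ^ 2) :
    MeasurePreserving (fun x : ι → ℝ => ∑ i, x i • c i)
      (Measure.pi fun _ => gaussianReal 0 1) (stdGaussian F) := by
  have hmeas : Measurable fun x : ι → ℝ => ∑ i, x i • c i := by fun_prop
  refine ⟨hmeas, ?_⟩
  have := Measure.isProbabilityMeasure_map (μ := Measure.pi fun _ : ι => gaussianReal 0 1)
    hmeas.aemeasurable
  refine Measure.ext_of_charFun (funext fun t => ?_)
  let s : EuclideanSpace ℝ ι := WithLp.toLp 2 fun i => ⟪c i, t⟫_ℝ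
  have hinner (x : ι → ℝ) : ⟪∑ i, x i • c i, t⟫_ℝ = ⟪WithLp.toLp 2 x, s⟫_ℝ := by
    simp [s, sum_inner, real_inner_smul_left, PiLp.inner_apply, mul_comm]
  have hnorm : ‖s‖ = ‖t‖ := by
    rw [← sq_eq_sq₀ (norm_nonneg _) (norm_nonneg _), EuclideanSpace.real_norm_sq_eq, ← hc t]
  calc charFun ((Measure.pi fun _ => gaussianReal 0 1).map fun x : ι → ℝ => ∑ i, x i • c i) t
      = charFun ((Measure.pi fun _ => gaussianReal 0 1).map (WithLp.toLp 2)) s := by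
        rw [charFun_apply, charFun_apply, integral_map hmeas.aemeasurable (by fun_prop),
          integral_map (by fun_prop) (by fun_prop)]
        simp_rw [hinner]
    _ = charFun (stdGaussian F) t := by
        rw [map_pi_eq_stdGaussian, charFun_stdGaussian, charFun_stdGaussian, hnorm]

end StandardGaussian

lemma measurePreserving_pi_fin_add (m n : ℕ) {X : Type*} [MeasurableSpace X] (μ : Measure X)
    [SigmaFinite μ] :
    MeasurePreserving
      (fun v : Fin (m + n) → X => (fun i => v (Fin.castAdd n i), fun j => v (Fin.natAdd m j)))
      (Measure.pi fun _ => μ) ((Measure.pi fun _ => μ).prod (Measure.pi fun _ => μ)) :=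
  (measurePreserving_sumPiEquivProdPi fun _ : Fin m ⊕ Fin n => μ).comp
    (measurePreserving_piCongrLeft (fun _ : Fin (m + n) => μ) finSumFinEquiv).symm

lemma stdGaussianPDFReal_complex (z : ℂ) :
    stdGaussianPDFReal z = exp (-‖z‖ ^ 2 / 2) / (2 * π) := by
  rw [stdGaussianPDFReal, Complex.finrank_real_complex, Nat.cast_ofNat, div_self two_ne_zero,
    Real.rpow_neg_one, inv_mul_eq_div]

section Sector

/-- The closed sector of half-angle `ψ ∈ [0, π]` around the positive real axis, i.e.
`{z | |arg z| ≤ ψ}`, in a form that avoids the branch cut of `arg`. -/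
def sector (ψ : ℝ) : Set ℂ := {z | ‖z‖ * cos ψ ≤ z.re}

@[measurability]
lemma measurableSet_sector (ψ : ℝ) : MeasurableSet (sector ψ) :=
  measurableSet_le (by fun_prop) (by fun_prop)

lemma cos_le_cos_iff_abs_le {ψ x : ℝ} (hψ : 0 ≤ ψ) (hψπ : ψ ≤ π) (hx : |x| < 2 * π - ψ) :
    cos ψ ≤ cos x ↔ |x| ≤ ψ := by
  rw [← cos_abs x]
  rcases le_or_gt |x| π with hxπ | hxπ
  · exact strictAntiOn_cos.le_iff_ge ⟨hψ, hψπ⟩ ⟨abs_nonneg x, hxπ⟩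
  · have hlt : cos |x| < cos ψ := by
      rw [← cos_two_pi_sub]
      exact cos_lt_cos_of_nonneg_of_le_pi hψ (by linarith) (by linarith)
    exact iff_of_false hlt.not_ge (by linarith)

lemma mul_exp_mem_sector_iff {ψ r x : ℝ} (hr : 0 < r) (hψ : 0 ≤ ψ) (hψπ : ψ ≤ π)
    (hx : |x| < 2 * π - ψ) : (r * Complex.exp (x * Complex.I) : ℂ) ∈ sector ψ ↔ |x| ≤ ψ := by
  rw [← cos_le_cos_iff_abs_le hψ hψπ hx, sector, mem_ofPred_eq, norm_mul,
    Complex.norm_exp_ofReal_mul_I, Complex.norm_of_nonneg hr.le, mul_one, Complex.re_ofReal_mul,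
    Complex.exp_ofReal_mul_I_re, mul_le_mul_iff_right₀ hr]

lemma mem_sector_pi_div_three_iff (z : ℂ) : z ∈ sector (π / 3) ↔ |z.im| ≤ √3 * z.re := by
  have hsq : ‖z‖ ^ 2 = z.re ^ 2 + z.im ^ 2 := by rw [Complex.sq_norm, Complex.normSq_apply]; ring
  have hthree : √3 ^ 2 = 3 := Real.sq_sqrt (by norm_num)
  rw [sector, mem_ofPred_eq, cos_pi_div_three]
  constructor <;> intro h
  · have hre : 0 ≤ z.re := by linarith [norm_nonneg z]
    refine abs_le_of_sq_le_sq (?_ : z.im ^ 2 ≤ (√3 * z.re) ^ 2) (by positivity)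
    nlinarith [norm_nonneg z]
  · have hre : 0 ≤ z.re := nonneg_of_mul_nonneg_right ((abs_nonneg _).trans h) (by positivity)
    have him : z.im ^ 2 ≤ (√3 * z.re) ^ 2 := sq_le_sq' (by linarith [neg_abs_le z.im])
      ((le_abs_self _).trans h)
    have : ‖z‖ ≤ 2 * z.re := (abs_le_of_sq_le_sq' (by nlinarith) (by positivity)).2
    linarith

lemma volume_abs_le_inter_abs_add_le (ψ φ : ℝ) :
    volume {θ : ℝ | |θ| ≤ ψ ∧ |θ + φ| ≤ ψ} = ENNReal.ofReal (2 * ψ - |φ|) := by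
  have hset : {θ : ℝ | |θ| ≤ ψ ∧ |θ + φ| ≤ ψ} = Icc (-ψ) ψ ∩ Icc (-ψ - φ) (ψ - φ) := by
    ext θ
    simp only [mem_ofPred_eq, mem_inter_iff, mem_Icc, abs_le, sub_le_iff_le_add, le_sub_iff_add_le]
  rw [hset, Icc_inter_Icc, Real.volume_Icc]
  congr 1
  rcases le_total 0 φ with h | h
  · rw [sup_of_le_left (by linarith), inf_of_le_right (by linarith), abs_of_nonneg h]; ring
  · rw [sup_of_le_right (by linarith), inf_of_le_left (by linarith), abs_of_nonpos h]; ring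

lemma polarCoord_symm_mul_mem_sector_iff {ψ r θ : ℝ} {u : ℂ} (hψ : 0 ≤ ψ) (hψ' : ψ ≤ π / 2)
    (hr : 0 < r) (hθ : |θ| < π) (hu : u ∈ Complex.slitPlane) :
    Complex.polarCoord.symm (r, θ) ∈ sector ψ ∧ Complex.polarCoord.symm (r, θ) * u ∈ sector ψ ↔
      |θ| ≤ ψ ∧ |θ + u.arg| ≤ ψ := by
  obtain ⟨huπ, hu0⟩ := Complex.mem_slitPlane_iff_arg.1 hu
  have harg : |u.arg| < π :=
    abs_lt.2 ⟨Complex.neg_pi_lt_arg u, (Complex.arg_le_pi u).lt_of_ne huπ⟩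
  have hpolar : Complex.polarCoord.symm (r, θ) = r * Complex.exp (θ * Complex.I) := by
    rw [Complex.polarCoord_symm_apply, Complex.exp_mul_I, Complex.ofReal_cos, Complex.ofReal_sin]
  have hmul : Complex.polarCoord.symm (r, θ) * u =
      (r * ‖u‖ : ℝ) * Complex.exp ((θ + u.arg : ℝ) * Complex.I) := by
    conv_lhs => rw [hpolar, ← Complex.norm_mul_exp_arg_mul_I u]
    push_cast
    rw [add_mul, Complex.exp_add]
    ring
  have hψπ : ψ ≤ π := by linarith [pi_pos]
  rw [hmul, hpolar, mul_exp_mem_sector_iff hr hψ hψπ (by linarith)]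
  refine and_congr_right fun hθψ => mul_exp_mem_sector_iff (by positivity) hψ hψπ ?_
  linarith [abs_add_le θ u.arg]

theorem setLIntegral_norm_sector_inter_sector {ψ : ℝ} {u : ℂ} (hψ : 0 ≤ ψ) (hψ' : ψ ≤ π / 2)
    (hu : u ∈ Complex.slitPlane) {g : ℝ → ℝ≥0∞} (hg : Measurable g) :
    ∫⁻ z in {z | z ∈ sector ψ ∧ z * u ∈ sector ψ}, g ‖z‖ =
      ENNReal.ofReal (2 * ψ - |u.arg|) * ∫⁻ r in Ioi (0 : ℝ), ENNReal.ofReal r * g r := by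
  set A := {z | z ∈ sector ψ ∧ z * u ∈ sector ψ}
  set B := {θ : ℝ | |θ| ≤ ψ ∧ |θ + u.arg| ≤ ψ}
  have hA : MeasurableSet A := (measurableSet_sector ψ).inter
    (measurableSet_sector ψ |>.preimage (by fun_prop : Measurable fun z => z * u))
  have hB : MeasurableSet B :=
    (measurableSet_le (by fun_prop : Measurable fun θ : ℝ => |θ|) measurable_const).inter
      (measurableSet_le (by fun_prop : Measurable fun θ : ℝ => |θ + u.arg|) measurable_const)
  have hpolar : ∀ p ∈ Ioi (0 : ℝ) ×ˢ Ioo (-π) π,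
      ENNReal.ofReal p.1 • A.indicator (fun z => g ‖z‖) (Complex.polarCoord.symm p) =
        ENNReal.ofReal p.1 * g p.1 * B.indicator 1 p.2 := by
    rintro ⟨r, θ⟩ ⟨hr, hθ⟩
    have hmem : Complex.polarCoord.symm (r, θ) ∈ A ↔ θ ∈ B :=
      polarCoord_symm_mul_mem_sector_iff hψ hψ' hr (abs_lt.2 hθ) hu
    by_cases h : θ ∈ B
    · rw [indicator_of_mem (hmem.2 h), indicator_of_mem h, Complex.norm_polarCoord_symm,
        abs_of_pos hr, smul_eq_mul, Pi.one_apply, mul_one]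
    · rw [indicator_of_notMem (hmem.not.2 h), indicator_of_notMem h, smul_zero, mul_zero]
  have hBπ : B ⊆ Icc (-ψ) ψ := fun θ hθ => abs_le.1 hθ.1
  calc ∫⁻ z in A, g ‖z‖
      = ∫⁻ p in Ioi (0 : ℝ) ×ˢ Ioo (-π) π, ENNReal.ofReal p.1 * g p.1 * B.indicator 1 p.2 := by
        rw [← lintegral_indicator hA, ← Complex.lintegral_comp_polarCoord_symm]
        exact setLIntegral_congr_fun (measurableSet_Ioi.prod measurableSet_Ioo) hpolar
    _ = (∫⁻ r in Ioi (0 : ℝ), ENNReal.ofReal r * g r) * ∫⁻ θ in Ioo (-π) π, B.indicator 1 θ := by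
        rw [Measure.volume_eq_prod, ← Measure.prod_restrict]
        exact lintegral_prod_mul (f := fun r => ENNReal.ofReal r * g r) (by fun_prop)
          (measurable_one.indicator hB).aemeasurable
    _ = ENNReal.ofReal (2 * ψ - |u.arg|) * ∫⁻ r in Ioi (0 : ℝ), ENNReal.ofReal r * g r := by
        rw [lintegral_indicator_one hB, Measure.restrict_apply hB, inter_eq_left.2
          (hBπ.trans (Icc_subset_Ioo (by linarith [pi_pos]) (by linarith [pi_pos]))),
          volume_abs_le_inter_abs_add_le, mul_comm]

end Sector

section Calculus

theorem lintegral_Ioi_of_hasDerivAt_of_nonneg {g g' : ℝ → ℝ} {a l : ℝ}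
    (hderiv : ∀ x ∈ Ici a, HasDerivAt g (g' x) x) (hg' : ∀ x ∈ Ioi a, 0 ≤ g' x)
    (hg : Tendsto g atTop (𝓝 l)) :
    ∫⁻ x in Ioi a, ENNReal.ofReal (g' x) = ENNReal.ofReal (l - g a) := by
  rw [← integral_Ioi_of_hasDerivAt_of_nonneg' hderiv hg' hg,
    ofReal_integral_eq_lintegral_ofReal (integrableOn_Ioi_deriv_of_nonneg' hderiv hg' hg)]
  exact (ae_restrict_iff' measurableSet_Ioi).2 (.of_forall hg')

theorem lintegral_Ioi_pow_three_mul_exp_neg_mul_sq {b : ℝ} (hb : 0 < b) :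
    ∫⁻ r in Ioi (0 : ℝ), ENNReal.ofReal (r ^ 3 * exp (-(b * r ^ 2))) =
      ENNReal.ofReal (1 / (2 * b ^ 2)) := by
  have hint : IntegrableOn (fun r : ℝ => r ^ 3 * exp (-(b * r ^ 2))) (Ioi 0) := by
    simpa using integrableOn_rpow_mul_exp_neg_mul_sq hb (s := 3) (by norm_num)
  have hval : ∫ r in Ioi (0 : ℝ), r ^ 3 * exp (-(b * r ^ 2)) = 1 / (2 * b ^ 2) := by
    have h := integral_rpow_mul_exp_neg_mul_rpow (p := 2) (q := 3) two_pos (by norm_num) hb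
    norm_num [Real.rpow_neg hb.le] at h
    rw [h]
    field_simp
  rw [← ofReal_integral_eq_lintegral_ofReal hint, hval]
  refine (ae_restrict_iff' measurableSet_Ioi).2 (.of_forall fun r (hr : 0 < r) => ?_)
  positivity

theorem integral_sub_abs_mul_of_hasDerivAt {G G' k : ℝ → ℝ} {a : ℝ} (ha : 0 ≤ a)
    (hG : ∀ x, HasDerivAt G (G' x) x) (hG' : ∀ x, HasDerivAt G' (k x) x) (hk : Continuous k) :
    ∫ x in -a..a, (a - |x|) * k x = G a + G (-a) - 2 * G 0 := by
  have hleft : ∫ x in -a..0, (a - |x|) * k x = G (-a) - G 0 + a * G' 0 := by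
    have habs : EqOn (fun x => (a - |x|) * k x) (fun x => (a + x) * k x) (uIcc (-a) 0) := by
      intro x hx
      rw [uIcc_of_le (by linarith)] at hx
      simp only [abs_of_nonpos hx.2, sub_neg_eq_add]
    rw [intervalIntegral.integral_congr habs,
      intervalIntegral.integral_eq_sub_of_hasDerivAt (f := fun x => (a + x) * G' x - G x)
        (fun x _ => ((((hasDerivAt_id' x).const_add a).mul (hG' x)).sub (hG x)).congr_deriv
          (by ring)) (Continuous.intervalIntegrable (by fun_prop) _ _)]
    ring
  have hright : ∫ x in 0..a, (a - |x|) * k x = G a - G 0 - a * G' 0 := by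
    have habs : EqOn (fun x => (a - |x|) * k x) (fun x => (a - x) * k x) (uIcc 0 a) := by
      intro x hx
      rw [uIcc_of_le ha] at hx
      simp only [abs_of_nonneg hx.1]
    rw [intervalIntegral.integral_congr habs,
      intervalIntegral.integral_eq_sub_of_hasDerivAt (f := fun x => (a - x) * G' x + G x)
        (fun x _ => ((((hasDerivAt_id' x).const_sub a).mul (hG' x)).add (hG x)).congr_deriv
          (by ring)) (Continuous.intervalIntegrable (by fun_prop) _ _)]
    ring
  have hcont : Continuous fun x => (a - |x|) * k x := by fun_prop
  rw [← intervalIntegral.integral_add_adjacent_intervals (hcont.intervalIntegrable (-a) 0)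
    (hcont.intervalIntegrable 0 a), hleft, hright]
  ring

theorem setLIntegral_sub_abs_mul_of_hasDerivAt {G G' k : ℝ → ℝ} {a L : ℝ} (ha : 0 ≤ a)
    (haL : a ≤ L) (hG : ∀ x, HasDerivAt G (G' x) x) (hG' : ∀ x, HasDerivAt G' (k x) x)
    (hk : Continuous k) (hk0 : ∀ x, 0 ≤ k x) :
    ∫⁻ x in Ioo (-L) L, ENNReal.ofReal (a - |x|) * ENNReal.ofReal (k x) =
      ENNReal.ofReal (G a + G (-a) - 2 * G 0) := by
  set h := fun x => ENNReal.ofReal ((a - |x|) * k x)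
  have hsupp : h.support ⊆ Ioo (-a) a := by
    intro x hx
    have : 0 < (a - |x|) * k x := ENNReal.ofReal_pos.1 (pos_iff_ne_zero.2 hx)
    exact abs_lt.1 (sub_pos.1 (pos_of_mul_pos_left this (hk0 x)))
  have hcont : Continuous fun x => (a - |x|) * k x := by fun_prop
  calc ∫⁻ x in Ioo (-L) L, ENNReal.ofReal (a - |x|) * ENNReal.ofReal (k x)
      = ∫⁻ x in Ioo (-L) L, h x := by simp_rw [h, ENNReal.ofReal_mul' (hk0 _)]
    _ = ∫⁻ x in Ioc (-a) a, h x := by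
        rw [setLIntegral_eq_of_support_subset (hsupp.trans (Ioo_subset_Ioo (by linarith) haL)),
          setLIntegral_eq_of_support_subset (hsupp.trans Ioo_subset_Ioc_self)]
    _ = ENNReal.ofReal (∫ x in -a..a, (a - |x|) * k x) := by
        rw [intervalIntegral.integral_of_le (by linarith), ofReal_integral_eq_lintegral_ofReal
          (hcont.integrableOn_Icc.mono_set Ioc_subset_Icc_self)]
        refine (ae_restrict_iff' measurableSet_Ioc).2 (.of_forall fun x hx => ?_)
        exact mul_nonneg (sub_nonneg.2 (abs_le.2 ⟨hx.1.le, hx.2⟩)) (hk0 x)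
    _ = ENNReal.ofReal (G a + G (-a) - 2 * G 0) := by
        rw [integral_sub_abs_mul_of_hasDerivAt ha hG hG' hk]

lemma arctan_cos_div_sin {b : ℝ} (hb : b ∈ Ioo 0 π) : arctan (cos b / sin b) = π / 2 - b := by
  rw [← inv_div, ← tan_eq_sin_div_cos, ← tan_pi_div_two_sub,
    arctan_tan (by linarith [hb.2]) (by linarith [hb.1])]

lemma sq_add_two_mul_cos_add_one_pos {b : ℝ} (hb : b ∈ Ioo 0 π) (r : ℝ) :
    0 < r ^ 2 + 2 * r * cos b + 1 := by
  nlinarith [sin_sq_add_cos_sq b, sq_nonneg (r + cos b), sin_pos_of_mem_Ioo hb]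

/-- A primitive on `ℝ` of `r ↦ r / (r² + 2 r cos b + 1)²`, for `b ∈ (0, π)`. -/
noncomputable def radialPrimitive (b r : ℝ) : ℝ :=
  -((cos b * r + 1) / (r ^ 2 + 2 * r * cos b + 1) / (2 * sin b ^ 2)) -
    cos b / (2 * sin b ^ 3) * arctan ((r + cos b) / sin b)

lemma hasDerivAt_radialPrimitive {b : ℝ} (hb : b ∈ Ioo 0 π) (r : ℝ) :
    HasDerivAt (radialPrimitive b) (r / (r ^ 2 + 2 * r * cos b + 1) ^ 2) r := by
  have hQ := (sq_add_two_mul_cos_add_one_pos hb r).ne'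
  have hs := (sin_pos_of_mem_Ioo hb).ne'
  have hcos : cos b ^ 2 = 1 - sin b ^ 2 := cos_sq' b
  have harctan : 1 + ((r + cos b) / sin b) ^ 2 = (r ^ 2 + 2 * r * cos b + 1) / sin b ^ 2 := by
    field_simp
    linear_combination hcos
  have hdQ : HasDerivAt (fun r => r ^ 2 + 2 * r * cos b + 1) (2 * r + 2 * cos b) r := by
    simpa using ((hasDerivAt_pow 2 r).add
      (((hasDerivAt_id' r).const_mul 2).mul_const (cos b))).add_const 1
  have hdN : HasDerivAt (fun r => cos b * r + 1) (cos b) r := by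
    simpa using ((hasDerivAt_id' r).const_mul (cos b)).add_const 1
  have hdA : HasDerivAt (fun r => arctan ((r + cos b) / sin b))
      (1 / (1 + ((r + cos b) / sin b) ^ 2) * (1 / sin b)) r :=
    (((hasDerivAt_id' r).add_const (cos b)).div_const (sin b)).arctan
  refine (((hdN.div hdQ hQ).div_const (2 * sin b ^ 2)).neg.sub
    (hdA.const_mul (cos b / (2 * sin b ^ 3)))).congr_deriv ?_
  rw [harctan]
  generalize hQ' : r ^ 2 + 2 * r * cos b + 1 = Q at hQ ⊢
  field_simp
  linear_combination (-2 * r) * hcos + (2 * cos b) * hQ'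

lemma tendsto_radialPrimitive_atTop {b : ℝ} (hb : b ∈ Ioo 0 π) :
    Tendsto (radialPrimitive b) atTop (𝓝 (-(cos b / (2 * sin b ^ 3) * (π / 2)))) := by
  unfold radialPrimitive
  have hrat : Tendsto (fun r => (cos b * r + 1) / (r ^ 2 + 2 * r * cos b + 1)) atTop (𝓝 0) := by
    have hcont : ContinuousAt
        (fun y : ℝ => (cos b * y + y ^ 2) / (1 + 2 * y * cos b + y ^ 2)) 0 := by
      fun_prop (disch := norm_num)
    have hinv : Tendsto (fun r => (cos b * r⁻¹ + r⁻¹ ^ 2) / (1 + 2 * r⁻¹ * cos b + r⁻¹ ^ 2))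
        atTop (𝓝 0) := by
      simpa [Function.comp_def] using hcont.tendsto.comp tendsto_inv_atTop_zero
    refine hinv.congr' ?_
    filter_upwards [eventually_gt_atTop 0] with r hr
    field_simp
  have harctan : Tendsto (fun r => arctan ((r + cos b) / sin b)) atTop (𝓝 (π / 2)) :=
    (tendsto_arctan_atTop.mono_right nhdsWithin_le_nhds).comp
      ((tendsto_atTop_add_const_right _ _ tendsto_id).atTop_div_const (sin_pos_of_mem_Ioo hb))
  simpa using (hrat.div_const (2 * sin b ^ 2)).neg.sub
    (harctan.const_mul (cos b / (2 * sin b ^ 3)))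

theorem lintegral_Ioi_div_sq_add_two_mul_cos_add_one_sq {b : ℝ} (hb : b ∈ Ioo 0 π) :
    ∫⁻ r in Ioi (0 : ℝ), ENNReal.ofReal (r / (r ^ 2 + 2 * r * cos b + 1) ^ 2) =
      ENNReal.ofReal ((sin b - b * cos b) / (2 * sin b ^ 3)) := by
  rw [lintegral_Ioi_of_hasDerivAt_of_nonneg
    (fun r _ => hasDerivAt_radialPrimitive hb r)
    (fun r (hr : 0 < r) => by positivity) (tendsto_radialPrimitive_atTop hb)]
  have hs := (sin_pos_of_mem_Ioo hb).ne'
  rw [radialPrimitive, zero_add, arctan_cos_div_sin hb]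
  congr 1
  field_simp
  ring

end Calculus

section ArgRatio

/-- The angle `b ∈ [0, π]` with `cos b = -α cos φ`. On the ray of argument `φ` the density of the
ratio of two `α`-correlated complex Gaussians depends on `α` and `φ` only through `b`. -/
noncomputable def tiltAngle (α φ : ℝ) : ℝ := arccos (-(α * cos φ))

/-- The density on `(-π, π)` of the argument of the ratio of two standard complex Gaussians of
correlation `α`. -/
noncomputable def argRatioPDFReal (α φ : ℝ) : ℝ :=
  (1 - α ^ 2) * (sin (tiltAngle α φ) - tiltAngle α φ * cos (tiltAngle α φ)) /
    (2 * π * sin (tiltAngle α φ) ^ 3)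

variable {α : ℝ}

lemma tiltAngle_mem_Ioo (hα : α ^ 2 < 1) (φ : ℝ) : tiltAngle α φ ∈ Ioo 0 π := by
  have habs : |α * cos φ| < 1 := by
    rw [abs_mul]
    exact (mul_le_of_le_one_right (abs_nonneg α) (abs_cos_le_one φ)).trans_lt
      ((sq_lt_one_iff_abs_lt_one α).1 hα)
  obtain ⟨hlt, hgt⟩ := abs_lt.1 habs
  exact ⟨arccos_pos.2 (by linarith), arccos_lt_pi.2 (by linarith)⟩

lemma cos_tiltAngle (hα : α ^ 2 ≤ 1) (φ : ℝ) : cos (tiltAngle α φ) = -(α * cos φ) := by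
  have habs : |α * cos φ| ≤ 1 := by
    rw [abs_mul]
    exact mul_le_one₀ ((sq_le_one_iff_abs_le_one α).1 hα) (abs_nonneg _) (abs_cos_le_one φ)
  obtain ⟨hle, hge⟩ := abs_le.1 habs
  exact cos_arccos (by linarith) (by linarith)

lemma sin_tiltAngle_pos (hα : α ^ 2 < 1) (φ : ℝ) : 0 < sin (tiltAngle α φ) :=
  sin_pos_of_mem_Ioo (tiltAngle_mem_Ioo hα φ)

lemma continuous_argRatioPDFReal (hα : α ^ 2 < 1) : Continuous (argRatioPDFReal α) := by
  have hb : Continuous (tiltAngle α) := continuous_arccos.comp (by fun_prop)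
  unfold argRatioPDFReal
  exact Continuous.div (by fun_prop) (by fun_prop) fun φ => by
    have := sin_tiltAngle_pos hα φ
    positivity

lemma mul_cos_le_sin {b : ℝ} (hb : b ∈ Icc 0 π) : b * cos b ≤ sin b := by
  rcases le_or_gt b (π / 2) with h | h
  · rcases h.eq_or_lt with rfl | h
    · simp
    have hcos := cos_pos_of_mem_Ioo ⟨by linarith [hb.1, pi_pos], h⟩
    rw [← le_div_iff₀ hcos, ← tan_eq_sin_div_cos]
    exact le_tan hb.1 h
  · exact (mul_nonpos_of_nonneg_of_nonpos hb.1 (cos_nonpos_of_pi_div_two_le_of_le h.le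
      (by linarith [hb.2, pi_pos]))).trans (sin_nonneg_of_mem_Icc hb)

lemma argRatioPDFReal_nonneg (hα : α ^ 2 < 1) (φ : ℝ) : 0 ≤ argRatioPDFReal α φ := by
  have hsin := sin_tiltAngle_pos hα φ
  have hnum := mul_cos_le_sin (Ioo_subset_Icc_self (tiltAngle_mem_Ioo hα φ))
  exact div_nonneg (mul_nonneg (sub_nonneg.2 hα.le) (sub_nonneg.2 hnum)) (by positivity)

lemma hasDerivAt_tiltAngle (hα : α ^ 2 < 1) (φ : ℝ) :
    HasDerivAt (tiltAngle α) (-(α * sin φ / sin (tiltAngle α φ))) φ := by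
  obtain ⟨hpos, hlt⟩ := tiltAngle_mem_Ioo hα φ
  have hcos : HasDerivAt (fun φ => -(α * cos φ)) (α * sin φ) φ :=
    ((hasDerivAt_cos φ).const_mul α).neg.congr_deriv (by ring)
  have harccos := hasDerivAt_arccos (arccos_lt_pi.1 hlt).ne' (arccos_pos.1 hpos).ne
  exact (harccos.comp φ hcos).congr_deriv (by rw [tiltAngle, sin_arccos]; ring)

lemma hasDerivAt_sq_sub_tiltAngle_sq (hα : α ^ 2 < 1) (φ : ℝ) :
    HasDerivAt (fun φ => (φ ^ 2 - tiltAngle α φ ^ 2) / (4 * π))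
      ((φ + α * sin φ * tiltAngle α φ / sin (tiltAngle α φ)) / (2 * π)) φ := by
  refine (((hasDerivAt_pow 2 φ).sub ((hasDerivAt_tiltAngle hα φ).pow 2)).div_const
    (4 * π)).congr_deriv ?_
  push_cast
  field_simp
  ring

lemma hasDerivAt_add_mul_tiltAngle_div (hα : α ^ 2 < 1) (φ : ℝ) :
    HasDerivAt (fun φ => (φ + α * sin φ * tiltAngle α φ / sin (tiltAngle α φ)) / (2 * π))
      (argRatioPDFReal α φ) φ := by
  have hs := (sin_tiltAngle_pos hα φ).ne'
  have hcos := cos_tiltAngle hα.le φ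
  have hb := hasDerivAt_tiltAngle hα φ
  have hsin : sin (tiltAngle α φ) ^ 2 = 1 - α ^ 2 + (α * sin φ) ^ 2 := by
    rw [sin_sq, hcos]
    linear_combination (-α ^ 2) * sin_sq_add_cos_sq φ
  refine (((hasDerivAt_id' φ).add ((((hasDerivAt_sin φ).const_mul α).mul hb).div
    hb.sin hs)).div_const (2 * π)).congr_deriv ?_
  rw [← neg_eq_iff_eq_neg] at hcos
  rw [argRatioPDFReal, Pi.mul_apply, ← hcos]
  generalize tiltAngle α φ = b at *
  field_simp
  linear_combination (sin b - b * cos b) * hsin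

end ArgRatio

section Ratio

variable {α β : ℝ}

lemma lintegral_eq_lintegral_comp_mul_add {c : ℂ} (hc : c ≠ 0) (d : ℂ) (f : ℂ → ℝ≥0∞) :
    ∫⁻ w, f w = ∫⁻ u, ENNReal.ofReal (‖c‖ ^ 2) * f (c * u + d) := by
  have hderiv (u : ℂ) (_ : u ∈ univ) :
      HasFDerivWithinAt (fun u => c * u + d) (ContinuousLinearMap.mul ℝ ℂ c) univ u :=
    ((ContinuousLinearMap.mul ℝ ℂ c).hasFDerivWithinAt).add_const d
  have hinj : InjOn (fun u => c * u + d) univ :=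
    ((add_left_injective d).comp (mul_right_injective₀ hc)).injOn
  have hsurj : (fun u => c * u + d) '' univ = univ :=
    image_univ_of_surjective ((add_right_surjective d).comp (mul_left_surjective₀ hc))
  have hdet : (ContinuousLinearMap.mul ℝ ℂ c).det = ‖c‖ ^ 2 :=
    (Algebra.norm_complex_apply c).trans (Complex.normSq_eq_norm_sq c)
  have h := lintegral_image_eq_lintegral_abs_det_fderiv_mul volume .univ hderiv hinj f
  simpa only [hsurj, hdet, Measure.restrict_univ, abs_sq] using h

lemma sq_norm_sub_two_mul_re_add_one_pos (hα : α ^ 2 < 1) (u : ℂ) :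
    0 < ‖u‖ ^ 2 - 2 * α * u.re + 1 := by
  rw [Complex.sq_norm, Complex.normSq_apply]
  nlinarith [sq_nonneg (u.re - α), mul_self_nonneg u.im]

lemma stdGaussianPDFReal_mul_stdGaussianPDFReal_mul_sub (hαβ : α ^ 2 + β ^ 2 = 1) (hβ : β ≠ 0)
    (z u : ℂ) :
    stdGaussianPDFReal z * (‖z / β‖ ^ 2 * stdGaussianPDFReal (z / β * (u - α))) =
      ‖z‖ ^ 2 / (4 * π ^ 2 * β ^ 2) *
        exp (-((‖u‖ ^ 2 - 2 * α * u.re + 1) / (2 * β ^ 2) * ‖z‖ ^ 2)) := by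
  have hu : ‖u - α‖ ^ 2 = ‖u‖ ^ 2 - 2 * α * u.re + 1 - β ^ 2 := by
    simp only [Complex.sq_norm, Complex.normSq_apply, Complex.sub_re, Complex.sub_im,
      Complex.ofReal_re, Complex.ofReal_im]
    linear_combination hαβ
  have hexp : exp (-‖z‖ ^ 2 / 2) * exp (-(‖z‖ ^ 2 / β ^ 2 * ‖u - α‖ ^ 2) / 2) =
      exp (-((‖u‖ ^ 2 - 2 * α * u.re + 1) / (2 * β ^ 2) * ‖z‖ ^ 2)) := by
    rw [← exp_add, hu]
    congr 1
    field_simp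
    ring
  rw [stdGaussianPDFReal_complex, stdGaussianPDFReal_complex, norm_mul, mul_pow, norm_div, div_pow,
    Complex.norm_real, norm_eq_abs, sq_abs, ← hexp]
  ring

/-- Substitute `α z + β w = z u` for `w` at fixed `z ≠ 0`. -/
theorem lintegral_stdGaussian_prod_eq_lintegral_ratio (hαβ : α ^ 2 + β ^ 2 = 1) (hβ : β ≠ 0)
    {f : ℂ × ℂ → ℝ≥0∞} (hf : Measurable f) :
    ∫⁻ p, f (p.1, α * p.1 + β * p.2) ∂(stdGaussian ℂ).prod (stdGaussian ℂ) =
      ∫⁻ u, ∫⁻ z, ENNReal.ofReal (‖z‖ ^ 2 / (4 * π ^ 2 * β ^ 2) *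
        exp (-((‖u‖ ^ 2 - 2 * α * u.re + 1) / (2 * β ^ 2) * ‖z‖ ^ 2))) * f (z, z * u) := by
  have hβ' : (β : ℂ) ≠ 0 := Complex.ofReal_ne_zero.2 hβ
  have hsubst {z : ℂ} (hz : z ≠ 0) :
      ENNReal.ofReal (stdGaussianPDFReal z) *
        ∫⁻ w, ENNReal.ofReal (stdGaussianPDFReal w) * f (z, α * z + β * w) =
      ∫⁻ u, ENNReal.ofReal (‖z‖ ^ 2 / (4 * π ^ 2 * β ^ 2) *
        exp (-((‖u‖ ^ 2 - 2 * α * u.re + 1) / (2 * β ^ 2) * ‖z‖ ^ 2))) * f (z, z * u) := by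
    rw [lintegral_eq_lintegral_comp_mul_add (div_ne_zero hz hβ') (-(z / β * α)),
      ← lintegral_const_mul' _ _ ENNReal.ofReal_ne_top]
    refine lintegral_congr fun u => ?_
    have harg : z / β * u + -(z / β * α) = z / β * (u - α) := by ring
    have hratio : α * z + β * (z / β * (u - α)) = z * u := by field_simp; ring
    rw [harg, hratio, ← stdGaussianPDFReal_mul_stdGaussianPDFReal_mul_sub hαβ hβ,
      ENNReal.ofReal_mul (stdGaussianPDFReal_nonneg z), ENNReal.ofReal_mul (by positivity),
      mul_assoc, mul_assoc]
  rw [lintegral_prod _ (by fun_prop), lintegral_stdGaussian,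
    lintegral_lintegral_swap (by fun_prop)]
  simp_rw [lintegral_stdGaussian]
  refine lintegral_congr_ae ?_
  filter_upwards [Measure.ae_ne volume 0] with z hz using hsubst hz

/-- The density of the ratio of two standard complex Gaussians of correlation `α`. -/
noncomputable def ratioPDFReal (α : ℝ) (u : ℂ) : ℝ :=
  (1 - α ^ 2) / (π * (‖u‖ ^ 2 - 2 * α * u.re + 1) ^ 2)

@[fun_prop]
lemma measurable_ratioPDFReal : Measurable (ratioPDFReal α) := by
  unfold ratioPDFReal
  fun_prop

lemma lintegral_Ioi_mul_gaussian_eq_ratioPDFReal (hαβ : α ^ 2 + β ^ 2 = 1) (hβ : β ≠ 0) (u : ℂ) :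
    ∫⁻ r in Ioi (0 : ℝ), ENNReal.ofReal r * ENNReal.ofReal (r ^ 2 / (4 * π ^ 2 * β ^ 2) *
      exp (-((‖u‖ ^ 2 - 2 * α * u.re + 1) / (2 * β ^ 2) * r ^ 2))) =
      ENNReal.ofReal (ratioPDFReal α u / (2 * π)) := by
  have hβ2 : 0 < β ^ 2 := by positivity
  have hq := sq_norm_sub_two_mul_re_add_one_pos (by linarith) (α := α) u
  rw [ratioPDFReal]
  set q := ‖u‖ ^ 2 - 2 * α * u.re + 1
  calc ∫⁻ r in Ioi (0 : ℝ), ENNReal.ofReal r * ENNReal.ofReal (r ^ 2 / (4 * π ^ 2 * β ^ 2) *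
        exp (-(q / (2 * β ^ 2) * r ^ 2)))
      = ∫⁻ r in Ioi (0 : ℝ), ENNReal.ofReal (1 / (4 * π ^ 2 * β ^ 2)) *
          ENNReal.ofReal (r ^ 3 * exp (-(q / (2 * β ^ 2) * r ^ 2))) := by
        refine setLIntegral_congr_fun measurableSet_Ioi fun r (hr : 0 < r) => ?_
        rw [← ENNReal.ofReal_mul hr.le, ← ENNReal.ofReal_mul (by positivity)]
        ring_nf
    _ = ENNReal.ofReal ((1 - α ^ 2) / (π * q ^ 2) / (2 * π)) := by
        rw [lintegral_const_mul' _ _ ENNReal.ofReal_ne_top,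
          lintegral_Ioi_pow_three_mul_exp_neg_mul_sq (by positivity),
          ← ENNReal.ofReal_mul (by positivity), sub_eq_of_eq_add' hαβ.symm]
        congr 1
        field_simp
        ring

lemma ae_linearMap_apply_ne_zero {F : Type*} [NormedAddCommGroup F] [NormedSpace ℝ F]
    [MeasurableSpace F] [BorelSpace F] [FiniteDimensional ℝ F] (μ : Measure F) [μ.IsAddHaarMeasure]
    {l : F →ₗ[ℝ] ℝ} (hl : l ≠ 0) : ∀ᵐ x ∂μ, l x ≠ 0 := by
  have h := Measure.addHaar_submodule μ l.ker (mt LinearMap.ker_eq_top.1 hl)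
  filter_upwards [compl_mem_ae_iff.2 h] with x hx using hx

lemma ae_mem_slitPlane : ∀ᵐ u : ℂ, u ∈ Complex.slitPlane := by
  have him : Complex.imLm ≠ 0 := fun h => one_ne_zero (LinearMap.congr_fun h Complex.I)
  filter_upwards [ae_linearMap_apply_ne_zero volume him] with u hu using .inr hu

lemma measurableSet_mem_sector_and_mem_sector (α β ψ : ℝ) :
    MeasurableSet {p : ℂ × ℂ | p.1 ∈ sector ψ ∧ α * p.1 + β * p.2 ∈ sector ψ} :=
  ((measurableSet_sector ψ).preimage measurable_fst).inter
    ((measurableSet_sector ψ).preimage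
      (by fun_prop : Measurable fun p : ℂ × ℂ => α * p.1 + β * p.2))

theorem stdGaussian_prod_sector_eq_lintegral_ratio {ψ : ℝ} (hψ : 0 ≤ ψ) (hψ' : ψ ≤ π / 2)
    (hαβ : α ^ 2 + β ^ 2 = 1) (hβ : β ≠ 0) :
    (stdGaussian ℂ).prod (stdGaussian ℂ)
        {p | p.1 ∈ sector ψ ∧ α * p.1 + β * p.2 ∈ sector ψ} =
      ∫⁻ u : ℂ, ENNReal.ofReal (2 * ψ - |u.arg|) * ENNReal.ofReal (ratioPDFReal α u / (2 * π)) := by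
  have hS := measurableSet_sector ψ
  have hratio := lintegral_stdGaussian_prod_eq_lintegral_ratio hαβ hβ
    (measurable_one.indicator (hS.prod hS) : Measurable ((sector ψ ×ˢ sector ψ).indicator 1))
  rw [← lintegral_indicator_one (measurableSet_mem_sector_and_mem_sector α β ψ)]
  refine hratio.trans (lintegral_congr_ae ?_)
  filter_upwards [ae_mem_slitPlane] with u hu
  have hA : MeasurableSet {z | z ∈ sector ψ ∧ z * u ∈ sector ψ} :=
    hS.inter (hS.preimage (by fun_prop : Measurable fun z => z * u))
  rw [← lintegral_Ioi_mul_gaussian_eq_ratioPDFReal hαβ hβ u,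
    ← setLIntegral_norm_sector_inter_sector hψ hψ' hu (by fun_prop), ← lintegral_indicator hA]
  refine lintegral_congr fun z => ?_
  have hmem : (z, z * u) ∈ sector ψ ×ˢ sector ψ ↔
      z ∈ {z | z ∈ sector ψ ∧ z * u ∈ sector ψ} := .rfl
  by_cases hz : z ∈ {z | z ∈ sector ψ ∧ z * u ∈ sector ψ}
  · rw [indicator_of_mem (hmem.2 hz), indicator_of_mem hz, Pi.one_apply, mul_one]
  · rw [indicator_of_notMem (hmem.not.2 hz), indicator_of_notMem hz, mul_zero]

lemma ratioPDFReal_polarCoord_symm {p : ℝ × ℝ} (hα : α ^ 2 ≤ 1) :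
    ratioPDFReal α (Complex.polarCoord.symm p) = (1 - α ^ 2) /
      (π * (p.1 ^ 2 + 2 * p.1 * cos (tiltAngle α p.2) + 1) ^ 2) := by
  rw [ratioPDFReal, Complex.norm_polarCoord_symm, sq_abs, cos_tiltAngle hα,
    Complex.polarCoord_symm_apply, Complex.re_ofReal_mul, Complex.add_re, Complex.ofReal_re,
    Complex.re_ofReal_mul, Complex.I_re]
  ring_nf

lemma lintegral_Ioi_mul_ratioPDFReal (hα : α ^ 2 < 1) (φ : ℝ) :
    ∫⁻ r in Ioi (0 : ℝ), ENNReal.ofReal r *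
      ENNReal.ofReal (ratioPDFReal α (Complex.polarCoord.symm (r, φ))) =
      ENNReal.ofReal (argRatioPDFReal α φ) := by
  have hα' : 0 < 1 - α ^ 2 := sub_pos.2 hα
  calc ∫⁻ r in Ioi (0 : ℝ), ENNReal.ofReal r *
        ENNReal.ofReal (ratioPDFReal α (Complex.polarCoord.symm (r, φ)))
      = ∫⁻ r in Ioi (0 : ℝ), ENNReal.ofReal ((1 - α ^ 2) / π) *
          ENNReal.ofReal (r / (r ^ 2 + 2 * r * cos (tiltAngle α φ) + 1) ^ 2) := by
        refine setLIntegral_congr_fun measurableSet_Ioi fun r (hr : 0 < r) => ?_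
        rw [ratioPDFReal_polarCoord_symm hα.le, ← ENNReal.ofReal_mul hr.le,
          ← ENNReal.ofReal_mul (by positivity)]
        congr 1
        field_simp
    _ = ENNReal.ofReal (argRatioPDFReal α φ) := by
        rw [lintegral_const_mul' _ _ ENNReal.ofReal_ne_top,
          lintegral_Ioi_div_sq_add_two_mul_cos_add_one_sq (tiltAngle_mem_Ioo hα φ),
          ← ENNReal.ofReal_mul (by positivity), argRatioPDFReal]
        congr 1
        ring

theorem lintegral_arg_mul_ratioPDFReal (hα : α ^ 2 < 1) {g : ℝ → ℝ≥0∞} (hg : Measurable g) :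
    ∫⁻ u : ℂ, g u.arg * ENNReal.ofReal (ratioPDFReal α u) =
      ∫⁻ φ in Ioo (-π) π, g φ * ENNReal.ofReal (argRatioPDFReal α φ) := by
  have harg {p : ℝ × ℝ} (hp : p ∈ Complex.polarCoord.target) :
      (Complex.polarCoord.symm p).arg = p.2 :=
    congrArg Prod.snd (Complex.polarCoord.right_inv hp)
  have hmeas : Measurable fun p => ratioPDFReal α (Complex.polarCoord.symm p) :=
    measurable_ratioPDFReal.comp (Complex.measurableEquivRealProd.symm.measurable.comp
      continuous_polarCoord_symm.measurable)
  calc ∫⁻ u : ℂ, g u.arg * ENNReal.ofReal (ratioPDFReal α u)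
      = ∫⁻ p in Ioi (0 : ℝ) ×ˢ Ioo (-π) π, ENNReal.ofReal p.1 *
          (g p.2 * ENNReal.ofReal (ratioPDFReal α (Complex.polarCoord.symm p))) := by
        rw [← Complex.lintegral_comp_polarCoord_symm]
        refine setLIntegral_congr_fun (measurableSet_Ioi.prod measurableSet_Ioo) fun p hp => ?_
        simp only [harg hp, smul_eq_mul]
    _ = ∫⁻ φ in Ioo (-π) π, g φ * ∫⁻ r in Ioi (0 : ℝ), ENNReal.ofReal r *
          ENNReal.ofReal (ratioPDFReal α (Complex.polarCoord.symm (r, φ))) := by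
        rw [Measure.volume_eq_prod, ← Measure.prod_restrict, lintegral_prod_symm _ (by fun_prop)]
        refine lintegral_congr fun φ => ?_
        have hsection : Measurable fun r => ENNReal.ofReal r *
            ENNReal.ofReal (ratioPDFReal α (Complex.polarCoord.symm (r, φ))) :=
          ENNReal.measurable_ofReal.mul (hmeas.comp measurable_prodMk_right).ennreal_ofReal
        rw [← lintegral_const_mul _ hsection]
        simp_rw [mul_left_comm]
    _ = ∫⁻ φ in Ioo (-π) π, g φ * ENNReal.ofReal (argRatioPDFReal α φ) := by
        simp_rw [lintegral_Ioi_mul_ratioPDFReal hα]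

end Ratio

section SectorProbability

variable {α β ψ : ℝ}

theorem stdGaussian_prod_sector_of_ne_zero (hαβ : α ^ 2 + β ^ 2 = 1) (hβ : β ≠ 0) (hψ : 0 ≤ ψ)
    (hψ' : ψ ≤ π / 2) :
    (stdGaussian ℂ).prod (stdGaussian ℂ)
        {p | p.1 ∈ sector ψ ∧ α * p.1 + β * p.2 ∈ sector ψ} =
      ENNReal.ofReal (((2 * ψ) ^ 2 + arccos (-α) ^ 2 - arccos (-(α * cos (2 * ψ))) ^ 2) /
        (4 * π ^ 2)) := by
  have hα : α ^ 2 < 1 := by linarith [sq_pos_of_ne_zero hβ]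
  calc (stdGaussian ℂ).prod (stdGaussian ℂ) {p | p.1 ∈ sector ψ ∧ α * p.1 + β * p.2 ∈ sector ψ}
      = ENNReal.ofReal (1 / (2 * π)) *
          ∫⁻ u : ℂ, ENNReal.ofReal (2 * ψ - |u.arg|) * ENNReal.ofReal (ratioPDFReal α u) := by
        rw [stdGaussian_prod_sector_eq_lintegral_ratio hψ hψ' hαβ hβ,
          ← lintegral_const_mul' _ _ ENNReal.ofReal_ne_top]
        refine lintegral_congr fun u => ?_
        rw [mul_left_comm, ← ENNReal.ofReal_mul (p := 1 / (2 * π)) (by positivity),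
          one_div_mul_eq_div]
    _ = ENNReal.ofReal (1 / (2 * π)) * ∫⁻ φ in Ioo (-π) π,
          ENNReal.ofReal (2 * ψ - |φ|) * ENNReal.ofReal (argRatioPDFReal α φ) := by
        rw [lintegral_arg_mul_ratioPDFReal (g := fun φ => ENNReal.ofReal (2 * ψ - |φ|)) hα
          (by fun_prop)]
    _ = _ := by
        rw [setLIntegral_sub_abs_mul_of_hasDerivAt (by linarith) (by linarith)
          (hasDerivAt_sq_sub_tiltAngle_sq hα) (hasDerivAt_add_mul_tiltAngle_div hα)
          (continuous_argRatioPDFReal hα) (argRatioPDFReal_nonneg hα),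
          ← ENNReal.ofReal_mul (by positivity)]
        simp only [tiltAngle, cos_neg, cos_zero]
        congr 1
        field_simp
        ring

theorem stdGaussian_sector (hψ : 0 ≤ ψ) (hψ' : ψ ≤ π / 2) :
    stdGaussian ℂ (sector ψ) = ENNReal.ofReal (ψ / π) := by
  have h := stdGaussian_prod_sector_of_ne_zero (α := 0) (β := 1) (by norm_num) one_ne_zero hψ hψ'
  have hset : {p : ℂ × ℂ | p.1 ∈ sector ψ ∧ (0 : ℝ) * p.1 + (1 : ℝ) * p.2 ∈ sector ψ} =
      sector ψ ×ˢ sector ψ := by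
    ext p
    simp
  have hval : ((2 * ψ) ^ 2 + arccos (-0) ^ 2 - arccos (-(0 * cos (2 * ψ))) ^ 2) / (4 * π ^ 2) =
      (ψ / π) ^ 2 := by
    rw [zero_mul]
    ring
  rw [hset, hval, Measure.prod_prod, ← sq, ENNReal.ofReal_pow (by positivity)] at h
  exact (ENNReal.pow_right_strictMono two_ne_zero).injective h

lemma ae_stdGaussian_re_ne_zero : ∀ᵐ z ∂stdGaussian ℂ, z.re ≠ 0 := by
  have hre : Complex.reLm ≠ 0 := fun h => one_ne_zero (LinearMap.congr_fun h 1)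
  rw [stdGaussian_eq_withDensity]
  exact (withDensity_absolutelyContinuous _ _).ae_le (ae_linearMap_apply_ne_zero volume hre)

lemma re_nonneg_of_mem_sector (hψ : 0 ≤ ψ) (hψ' : ψ ≤ π / 2) {z : ℂ} (hz : z ∈ sector ψ) :
    0 ≤ z.re :=
  (mul_nonneg (norm_nonneg z)
    (cos_nonneg_of_neg_pi_div_two_le_of_le (by linarith [pi_pos]) hψ')).trans hz

theorem stdGaussian_sector_inter_neg (hψ : 0 ≤ ψ) (hψ' : ψ ≤ π / 2) :
    stdGaussian ℂ {z | z ∈ sector ψ ∧ -z ∈ sector ψ} = 0 := by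
  rw [measure_eq_zero_iff_ae_notMem]
  filter_upwards [ae_stdGaussian_re_ne_zero] with z hre ⟨hz, hneg⟩
  exact hre (le_antisymm (neg_nonneg.1 (re_nonneg_of_mem_sector hψ hψ' hneg))
    (re_nonneg_of_mem_sector hψ hψ' hz))

theorem stdGaussian_prod_sector (hαβ : α ^ 2 + β ^ 2 = 1) (hψ : 0 ≤ ψ) (hψ' : ψ ≤ π / 2) :
    (stdGaussian ℂ).prod (stdGaussian ℂ)
        {p | p.1 ∈ sector ψ ∧ α * p.1 + β * p.2 ∈ sector ψ} =
      ENNReal.ofReal (((2 * ψ) ^ 2 + arccos (-α) ^ 2 - arccos (-(α * cos (2 * ψ))) ^ 2) /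
        (4 * π ^ 2)) := by
  rcases ne_or_eq β 0 with hβ | rfl
  · exact stdGaussian_prod_sector_of_ne_zero hαβ hβ hψ hψ'
  have harccos : arccos (cos (2 * ψ)) = 2 * ψ := arccos_cos (by linarith) (by linarith)
  have hfst : {p : ℂ × ℂ | p.1 ∈ sector ψ ∧ α * p.1 + (0 : ℝ) * p.2 ∈ sector ψ} =
      {z | z ∈ sector ψ ∧ α * z ∈ sector ψ} ×ˢ univ := by
    ext p
    simp
  rw [hfst, Measure.prod_prod, measure_univ, mul_one]
  obtain rfl | rfl : α = 1 ∨ α = -1 := sq_eq_one_iff.1 (by simpa using hαβ)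
  · have hval : ((2 * ψ) ^ 2 + arccos (-1) ^ 2 - arccos (-(1 * cos (2 * ψ))) ^ 2) / (4 * π ^ 2) =
        ψ / π := by
      rw [one_mul, arccos_neg, arccos_neg, harccos, arccos_one]
      field_simp
      ring
    rw [hval]
    simpa only [Complex.ofReal_one, one_mul, and_self, ofPred_mem_eq] using
      stdGaussian_sector hψ hψ'
  · have hval : ((2 * ψ) ^ 2 + arccos (- -1) ^ 2 - arccos (-(-1 * cos (2 * ψ))) ^ 2) /
        (4 * π ^ 2) = 0 := by
      rw [neg_one_mul, neg_neg, neg_neg, harccos, arccos_one]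
      ring
    rw [hval]
    simpa only [Complex.ofReal_neg, Complex.ofReal_one, neg_one_mul, ENNReal.ofReal_zero]
      using stdGaussian_sector_inter_neg hψ hψ'

end SectorProbability

section Argmax

/-- The Mercedes-Benz frame of `ℂ`: the images of the standard basis of `ℝ³` under the projection
along `(1, 1, 1)`, in an orthonormal basis of the orthogonal plane whose first vector is the
direction of `(2, -1, -1)`. -/
noncomputable def mercedesBenzFrame : Fin 3 → ℂ :=
  ![⟨2 / √6, 0⟩, ⟨-1 / √6, 1 / √2⟩, ⟨-1 / √6, -1 / √2⟩]

lemma sum_smul_mercedesBenzFrame (x : Fin 3 → ℝ) :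
    ∑ i, x i • mercedesBenzFrame i = ⟨(2 * x 0 - x 1 - x 2) / √6, (x 1 - x 2) / √2⟩ := by
  simp only [mercedesBenzFrame, Fin.sum_univ_three, Matrix.cons_val_zero, Matrix.cons_val_one,
    Matrix.cons_val]
  apply Complex.ext
  · simp only [Complex.add_re, Complex.smul_re, smul_eq_mul]
    ring
  · simp only [Complex.add_im, Complex.smul_im, smul_eq_mul]
    ring

lemma sum_inner_mercedesBenzFrame_sq (t : ℂ) :
    ∑ i, ⟪mercedesBenzFrame i, t⟫_ℝ ^ 2 = ‖t‖ ^ 2 := by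
  have h6 : √6 ^ 2 = 6 := Real.sq_sqrt (by norm_num)
  have h2 : √2 ^ 2 = 2 := Real.sq_sqrt (by norm_num)
  rw [Complex.sq_norm, Complex.normSq_apply]
  simp only [mercedesBenzFrame, Complex.inner, Complex.mul_re, Complex.conj_re, Complex.conj_im,
    Fin.sum_univ_three, Matrix.cons_val_zero, Matrix.cons_val_one, Matrix.cons_val]
  field_simp
  linear_combination (-t.re ^ 2 * √2 ^ 2) * h6 - (t.im ^ 2 * √6 ^ 2) * h2

lemma sum_smul_mercedesBenzFrame_mem_sector_iff (x : Fin 3 → ℝ) :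
    ∑ i, x i • mercedesBenzFrame i ∈ sector (π / 3) ↔ x 1 ≤ x 0 ∧ x 2 ≤ x 0 := by
  have hscale : √3 * ((2 * x 0 - x 1 - x 2) / √6) = (2 * x 0 - x 1 - x 2) / √2 := by
    rw [show (6 : ℝ) = 3 * 2 by norm_num, Real.sqrt_mul (by norm_num)]
    field_simp
  rw [sum_smul_mercedesBenzFrame, mem_sector_pi_div_three_iff]
  dsimp only
  rw [hscale, abs_div, abs_of_pos (by positivity : 0 < √2),
    div_le_div_iff_of_pos_right (by positivity), abs_le]
  constructor <;> intro h <;> constructor <;> linarith [h.1, h.2]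

theorem pi_gaussianReal_argmax_eq_stdGaussian_prod_sector (α β : ℝ) :
    (Measure.pi fun _ : Fin 6 => gaussianReal 0 1)
      {v : Fin 6 → ℝ | v 1 ≤ v 0 ∧ v 2 ≤ v 0 ∧
        α * v 1 + β * v 4 ≤ α * v 0 + β * v 3 ∧
        α * v 2 + β * v 5 ≤ α * v 0 + β * v 3} =
      (stdGaussian ℂ).prod (stdGaussian ℂ)
        {p | p.1 ∈ sector (π / 3) ∧ α * p.1 + β * p.2 ∈ sector (π / 3)} := by
  have hmp := measurePreserving_sum_smul_of_parseval sum_inner_mercedesBenzFrame_sq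
  have hlin (x y : Fin 3 → ℝ) : α * ∑ i, x i • mercedesBenzFrame i +
      β * ∑ i, y i • mercedesBenzFrame i = ∑ i, (α * x i + β * y i) • mercedesBenzFrame i := by
    simp only [← Complex.real_smul, Finset.smul_sum, smul_smul, ← Finset.sum_add_distrib, add_smul]
  rw [← ((hmp.prod hmp).comp
    (measurePreserving_pi_fin_add 3 3 (gaussianReal 0 1))).measure_preimage
      (measurableSet_mem_sector_and_mem_sector α β (π / 3)).nullMeasurableSet]
  congr 1
  ext v
  simp only [mem_preimage, mem_ofPred_eq, Function.comp_apply, Prod.map_apply, hlin,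
    sum_smul_mercedesBenzFrame_mem_sector_iff (fun _ => _)]
  exact and_assoc.symm

end Argmax

lemma Pfun_eq_arccos (α : ℝ) :
    Pfun α = ((2 * (π / 3)) ^ 2 + arccos (-α) ^ 2 - arccos (-(α * cos (2 * (π / 3)))) ^ 2) /
      (4 * π ^ 2) := by
  have hcos : cos (2 * (π / 3)) = -(1 / 2) := by
    rw [cos_two_mul, cos_pi_div_three]
    norm_num
  have hhalf : -(α * -(1 / 2)) = α / 2 := by ring
  rw [hcos, hhalf, arccos_neg, arccos_eq_pi_div_two_sub_arcsin, arccos_eq_pi_div_two_sub_arcsin,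
    Pfun]
  field_simp
  ring

/-- For `α² + β² = 1` and i.i.d. standard normals `x₁, x₂, x₃, y₁, y₂, y₃`
(coordinates `v 0, v 1, v 2, v 3, v 4, v 5` under the 6-fold product Gaussian measure),
the probability that `x₁ ≥ x₂`, `x₁ ≥ x₃`, `αx₁ + βy₁ ≥ αx₂ + βy₂` and
`αx₁ + βy₁ ≥ αx₃ + βy₃` equals `P(α)`. -/
theorem stmt_14 (α β : ℝ) (hab : α ^ 2 + β ^ 2 = 1) :
    (Measure.pi fun _ : Fin 6 => gaussianReal 0 1)
      {v : Fin 6 → ℝ | v 1 ≤ v 0 ∧ v 2 ≤ v 0 ∧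
        α * v 1 + β * v 4 ≤ α * v 0 + β * v 3 ∧
        α * v 2 + β * v 5 ≤ α * v 0 + β * v 3} = ENNReal.ofReal (Pfun α) := by
  rw [pi_gaussianReal_argmax_eq_stdGaussian_prod_sector, stdGaussian_prod_sector hab (by positivity)
    (by linarith [pi_pos]), Pfun_eq_arccos]
end

section
/- For every real α with −1 ≤ α ≤ 1, we have 1 − 3·P(α) ≥ (1 − α)/2, where P(α) = 1/9 + (arcsin α + arcsin(α/2))/(4π) + ((arcsin α)² − (arcsin(α/2))²)/(4π²). -/
open Real

/-!
The arcsine is convex on `[0, 1]`. Its chords from the origin bound `arcsin α` and `arcsin (α / 2)`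
from above, which settles `0 ≤ α`. Since `arcsin` is odd, the case `α ≤ 0` asks for lower bounds at
`-α`: the tangent line at `1 / 2` bounds `arcsin (-α / 2)`, and the half-angle formula turns
the chord bound into `arccos x ≤ π / 2 * √(1 - x)`, which is the bound needed for `arcsin (-α)`.
Equality holds at `α = ±1`, so all four estimates are chosen to be exact there.
-/

section Arcsin

variable {t x : ℝ}

theorem add_mul_sub_le_of_convexOn_of_hasDerivAt {s : Set ℝ} {f : ℝ → ℝ} {f' y : ℝ}
    (hf : ConvexOn ℝ s f) (hx : x ∈ s) (hy : y ∈ s) (hf' : HasDerivAt f f' x) :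
    f x + f' * (y - x) ≤ f y := by
  rcases lt_trichotomy x y with hxy | rfl | hyx
  · have hslope := hf.le_slope_of_hasDerivAt hx hy hxy hf'
    rw [slope_def_field, le_div_iff₀ (sub_pos.2 hxy)] at hslope
    linarith
  · simp
  · have hslope := hf.slope_le_of_hasDerivAt hy hx hyx hf'
    rw [slope_def_field, div_le_iff₀ (sub_pos.2 hyx)] at hslope
    linarith

theorem convexOn_arcsin : ConvexOn ℝ (Set.Icc 0 1) arcsin := by
  refine MonotoneOn.convexOn_of_deriv (convex_Icc 0 1) continuous_arcsin.continuousOn ?_ ?_ <;>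
    rw [interior_Icc]
  · rintro x ⟨hx0, hx1⟩
    exact (differentiableAt_arcsin.2 ⟨by linarith, hx1.ne⟩).differentiableWithinAt
  · rintro x ⟨hx0, -⟩ y ⟨-, hy1⟩ hxy
    have hy : 0 < 1 - y ^ 2 := by nlinarith
    simp only [deriv_arcsin]
    gcongr

theorem arcsin_mul_le_mul_arcsin (ht0 : 0 ≤ t) (ht1 : t ≤ 1) (hx0 : 0 ≤ x) (hx1 : x ≤ 1) :
    arcsin (t * x) ≤ t * arcsin x := by
  simpa using convexOn_arcsin.2 ⟨hx0, hx1⟩ ⟨le_rfl, zero_le_one⟩ ht0 (sub_nonneg.2 ht1)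
    (add_sub_cancel t 1)

theorem two_mul_arcsin (hx0 : 0 ≤ x) (hx1 : x ≤ 1) : 2 * arcsin x = arccos (1 - 2 * x ^ 2) := by
  have hcos : cos (2 * arcsin x) = 1 - 2 * x ^ 2 := by
    rw [cos_two_mul, cos_sq', sin_arcsin (by linarith) hx1]
    ring
  rw [← hcos, arccos_cos (mul_nonneg zero_le_two (arcsin_nonneg.2 hx0))]
  linarith [arcsin_le_pi_div_two x]

theorem arcsin_one_half : arcsin (1 / 2) = π / 6 :=
  arcsin_eq_of_sin_eq sin_pi_div_six ⟨by linarith [pi_pos], by linarith [pi_pos]⟩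

theorem arcsin_sqrt_two_div_two : arcsin (√2 / 2) = π / 4 :=
  arcsin_eq_of_sin_eq sin_pi_div_four ⟨by linarith [pi_pos], by linarith [pi_pos]⟩

theorem arcsin_div_pi_le_half (hx0 : 0 ≤ x) (hx1 : x ≤ 1) : arcsin x / π ≤ x / 2 := by
  have hchord := arcsin_mul_le_mul_arcsin hx0 hx1 zero_le_one le_rfl
  rw [mul_one, arcsin_one] at hchord
  rw [div_le_iff₀ pi_pos]
  linarith

theorem arcsin_half_div_pi_le (hx0 : 0 ≤ x) (hx1 : x ≤ 1) : arcsin (x / 2) / π ≤ x / 6 := by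
  have hchord := arcsin_mul_le_mul_arcsin (x := 1 / 2) hx0 hx1 (by norm_num) (by norm_num)
  rw [arcsin_one_half, mul_one_div] at hchord
  rw [div_le_iff₀ pi_pos]
  linarith

-- The tangent line has slope `1 / (√3 * π)`; the final estimate tolerates any slope up to `5 / 16`.
theorem le_arcsin_half_div_pi (hx0 : 0 ≤ x) (hx1 : x ≤ 1) :
    1 / 6 - (1 - x) / 4 ≤ arcsin (x / 2) / π := by
  have hderiv : HasDerivAt arcsin (1 / √(1 - (1 / 2) ^ 2)) (1 / 2) :=
    hasDerivAt_arcsin (by norm_num) (by norm_num)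
  have htangent := add_mul_sub_le_of_convexOn_of_hasDerivAt (y := x / 2) convexOn_arcsin
    ⟨by norm_num, by norm_num⟩ ⟨by linarith, by linarith⟩ hderiv
  have hslope : 1 / √(1 - (1 / 2) ^ 2) ≤ π / 2 := by
    have hsqrt : (2 / 3 : ℝ) ≤ √(1 - (1 / 2) ^ 2) := le_sqrt_of_sq_le (by norm_num)
    calc 1 / √(1 - (1 / 2) ^ 2) ≤ 1 / (2 / 3) := by gcongr
      _ ≤ π / 2 := by linarith [pi_gt_three]
  rw [arcsin_one_half] at htangent
  have hrounded : π / 2 * (x / 2 - 1 / 2) ≤ 1 / √(1 - (1 / 2) ^ 2) * (x / 2 - 1 / 2) :=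
    mul_le_mul_of_nonpos_right hslope (by linarith)
  rw [le_div_iff₀ pi_pos]
  linarith

theorem arccos_le_pi_div_two_mul_sqrt_one_sub (hx0 : 0 ≤ x) (hx1 : x ≤ 1) :
    arccos x ≤ π / 2 * √(1 - x) := by
  have hsqrt : √(1 - x) ≤ 1 := sqrt_le_one.2 (by linarith)
  have hsqrt_two : √2 / 2 ≤ 1 := by linarith [sqrt_two_lt_three_halves]
  have hhalf : 1 - 2 * (√(1 - x) * (√2 / 2)) ^ 2 = x := by
    rw [mul_pow, div_pow, sq_sqrt (sub_nonneg.2 hx1), sq_sqrt zero_le_two]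
    ring
  calc arccos x = 2 * arcsin (√(1 - x) * (√2 / 2)) := by
        rw [two_mul_arcsin (by positivity) (mul_le_one₀ hsqrt (by positivity) hsqrt_two), hhalf]
    _ ≤ 2 * (√(1 - x) * (π / 4)) := by
        rw [← arcsin_sqrt_two_div_two]
        gcongr
        exact arcsin_mul_le_mul_arcsin (sqrt_nonneg _) hsqrt (by positivity) hsqrt_two
    _ = π / 2 * √(1 - x) := by ring

theorem div_four_le_arcsin_div_pi_mul_one_sub (hx0 : 0 ≤ x) (hx1 : x ≤ 1) :
    x / 4 ≤ arcsin x / π * (1 - arcsin x / π) := by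
  have harccos : arccos x / π ≤ √(1 - x) / 2 := by
    rw [div_le_iff₀ pi_pos]
    linarith [arccos_le_pi_div_two_mul_sqrt_one_sub hx0 hx1]
  have hsq : (arccos x / π) ^ 2 ≤ (1 - x) / 4 := by
    calc (arccos x / π) ^ 2 ≤ (√(1 - x) / 2) ^ 2 := by
          gcongr
          exact div_nonneg (arccos_nonneg x) pi_pos.le
      _ = (1 - x) / 4 := by
          rw [div_pow, sq_sqrt (sub_nonneg.2 hx1)]
          norm_num
  have harcsin : arcsin x / π = 1 / 2 - arccos x / π := by
    rw [arcsin_eq_pi_div_two_sub_arccos]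
    field_simp
  rw [harcsin]
  linarith

theorem arcsin_div_pi_mul_one_add_le (hx0 : 0 ≤ x) (hx1 : x ≤ 1) :
    arcsin x / π * (1 + arcsin x / π) + arcsin (x / 2) / π * (1 - arcsin (x / 2) / π) ≤
      2 / 3 * x + 2 / 9 := by
  have hchord : arcsin x / π ≤ x / 2 := arcsin_div_pi_le_half hx0 hx1
  have hchord_half : arcsin (x / 2) / π ≤ x / 6 := arcsin_half_div_pi_le hx0 hx1
  have hnonneg : 0 ≤ arcsin x / π := div_nonneg (arcsin_nonneg.2 hx0) pi_pos.le
  have hfull : arcsin x / π * (1 + arcsin x / π) ≤ x / 2 * (1 + x / 2) :=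
    mul_le_mul hchord (by linarith) (by linarith) (by linarith)
  have hhalf : arcsin (x / 2) / π * (1 - arcsin (x / 2) / π) ≤ x / 6 * (1 - x / 6) := by
    have hfactor : 0 ≤ (x / 6 - arcsin (x / 2) / π) * (1 - x / 6 - arcsin (x / 2) / π) :=
      mul_nonneg (by linarith) (by linarith)
    linarith
  have hsq : x ^ 2 ≤ 1 := pow_le_one₀ hx0 hx1
  linarith

theorem le_arcsin_div_pi_mul_one_sub (hx0 : 0 ≤ x) (hx1 : x ≤ 1) :
    2 / 3 * x - 2 / 9 ≤
      arcsin x / π * (1 - arcsin x / π) + arcsin (x / 2) / π * (1 + arcsin (x / 2) / π) := by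
  have hfull : x / 4 ≤ arcsin x / π * (1 - arcsin x / π) :=
    div_four_le_arcsin_div_pi_mul_one_sub hx0 hx1
  have hhalf : 5 / 12 * x - 2 / 9 ≤ arcsin (x / 2) / π * (1 + arcsin (x / 2) / π) := by
    nlinarith [le_arcsin_half_div_pi hx0 hx1, sq_nonneg (arcsin (x / 2) / π - 1 / 6)]
  linarith

end Arcsin

/-- For every `α ∈ [−1, 1]`, `1 − 3P(α) ≥ (1 − α)/2`, where
`P(α) = 1/9 + (arcsin α + arcsin(α/2))/(4π) + ((arcsin α)² − (arcsin(α/2))²)/(4π²)`. -/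
theorem stmt_15 (α : ℝ) (hα : -1 ≤ α) (hα' : α ≤ 1) :
    1 - 3 * (1 / 9 + (Real.arcsin α + Real.arcsin (α / 2)) / (4 * π) +
        ((Real.arcsin α) ^ 2 - (Real.arcsin (α / 2)) ^ 2) / (4 * π ^ 2)) ≥
      (1 - α) / 2 := by
  suffices hsum : arcsin α / π * (1 + arcsin α / π) +
      arcsin (α / 2) / π * (1 - arcsin (α / 2) / π) ≤ 2 / 3 * α + 2 / 9 by
    calc (1 - α) / 2 ≤ 2 / 3 - 3 / 4 * (arcsin α / π * (1 + arcsin α / π) +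
          arcsin (α / 2) / π * (1 - arcsin (α / 2) / π)) := by linarith
      _ = _ := by
        field_simp
        ring
  rcases le_total 0 α with hnonneg | hnonpos
  · exact arcsin_div_pi_mul_one_add_le hnonneg hα'
  · have hneg := le_arcsin_div_pi_mul_one_sub (neg_nonneg.2 hnonpos) (neg_le.1 hα)
    simp only [neg_div, arcsin_neg] at hneg
    linarith
end

section
/- Let x, y ∈ ℝⁿ be unit vectors and let a₁, a₂, a₃ be independent standard Gaussian random vectors in ℝⁿ (each distributed as the product of n standard normals, the three being independent). Then the probability that the maximizing index differs, i.e., the probability of the event that there exist distinct indices i, j ∈ {1,2,3} with aᵢ·x > aₖ·x for all k ≠ i and aⱼ·y > aₖ·y for all k ≠ j, is at least (1 − x·y)/2. -/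
open MeasureTheory ProbabilityTheory

/-!
Write `ρ = x · y`.

For `0 ≤ ρ < 1`, count inversions between the orders of `(aᵢ · x)` and `(aᵢ · y)`. If the maximizing
indices agree then every inverted pair avoids the common maximum, so there is at most one; likewise
for the minimizing indices, and if both agree there is none. Hence the number of inversions is at
most `3 / 2` times the number of disagreeing extremes. By Sheppard's formula each of the three pairs
is inverted with probability `arccos ρ / π`, and by symmetry minima behave like maxima, so the
maximizing indices differ with probability at least `arccos ρ / π ≥ (1 - ρ) / 2`.

For `ρ ≤ 0`, bound instead the probability that a given index wins for both vectors. It is an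
orthant probability of a Gaussian vector in dimension four. After factoring out `(1 - ρ ^ 2)⁻¹`, the
exponent of its density is affine in `ρ`; convexity of `exp` interpolates between `ρ = 0`, where the
integral factors, and `ρ = -1`, where the quadratic form dominates half a sum of two squares. This
gives at most `(1 + ρ) / 6` for each of the three indices.
-/

open scoped Matrix

local notation "vol₊" => (volume.restrict (Set.Ioi 0) : Measure ℝ)

/-- The law of an `α × β` random matrix with independent standard normal entries, read as a family
of independent standard Gaussian rows indexed by `α`. -/
noncomputable abbrev gaussianMatrix (α β : Type*) [Fintype α] [Fintype β] : Measure (α → β → ℝ) :=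
  Measure.pi fun _ => Measure.pi fun _ => gaussianReal 0 1

lemma pi_withDensity_ofReal {ι : Type*} [Fintype ι] {α : ι → Type*} [∀ i, MeasurableSpace (α i)]
    (μ : ∀ i, Measure (α i)) [∀ i, SigmaFinite (μ i)] {f : ∀ i, α i → ℝ}
    (hf : ∀ i, Integrable (f i) (μ i)) (hf0 : ∀ i x, 0 ≤ f i x) :
    (Measure.pi fun i => (μ i).withDensity fun x => ENNReal.ofReal (f i x)) =
      (Measure.pi μ).withDensity fun x => ENNReal.ofReal (∏ i, f i (x i)) := by
  refine Measure.pi_eq fun s hs => ?_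
  rw [withDensity_apply _ (.univ_pi hs), Measure.restrict_pi_pi,
    ← ofReal_integral_eq_lintegral_ofReal
      (Integrable.fintype_prod_dep fun i => (hf i).restrict)
      (.of_forall fun x => Finset.prod_nonneg fun i _ => hf0 i _),
    integral_fintype_prod_eq_prod, ENNReal.ofReal_prod_of_nonneg fun i _ => integral_nonneg (hf0 i)]
  refine Finset.prod_congr rfl fun i _ => ?_
  rw [withDensity_apply _ (hs i),
    ofReal_integral_eq_lintegral_ofReal (hf i).restrict (.of_forall (hf0 i))]

section GaussianVectors

variable {ι κ κ' : Type*} [Fintype ι] [Fintype κ] [Fintype κ']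

lemma pi_gaussianReal_eq_withDensity :
    (Measure.pi fun _ : ι => gaussianReal 0 1) =
      volume.withDensity fun w => ENNReal.ofReal
        ((√(2 * Real.pi))⁻¹ ^ Fintype.card ι * Real.exp (-(w ⬝ᵥ w) / 2)) := by
  simp only [gaussianReal_of_var_ne_zero _ one_ne_zero, gaussianPDF_def]
  rw [pi_withDensity_ofReal _ (fun _ => integrable_gaussianPDFReal 0 1)
    fun _ => gaussianPDFReal_nonneg 0 1, volume_pi]
  congr! 3
  simp only [gaussianPDFReal, Finset.prod_mul_distrib, ← Real.exp_sum, Finset.prod_const,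
    dotProduct, NNReal.coe_one, mul_one, sub_zero, Finset.card_univ, ← Finset.sum_div,
    ← Finset.sum_neg_distrib, sq]

lemma charFunDual_gaussianReal (M : StrongDual ℝ ℝ) :
    charFunDual (gaussianReal 0 1) M = Complex.exp ((-(M 1 ^ 2) / 2 : ℝ)) := by
  have hM : M = (M 1) • ContinuousLinearMap.id ℝ ℝ := by ext; simp
  rw [hM]
  have := charFun_gaussianReal (μ := 0) (v := 1) (M 1)
  rw [charFun_apply_real] at this
  simp [charFunDual_apply, this, neg_div]

lemma charFunDual_pi_gaussianReal (L : StrongDual ℝ (κ → ℝ)) {v : κ → ℝ} (hL : ∀ z, L z = v ⬝ᵥ z) :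
    charFunDual (Measure.pi fun _ : κ => gaussianReal 0 1) L =
      Complex.exp ((-(v ⬝ᵥ v) / 2 : ℝ)) := by
  classical
  have hv : ∀ k, L (Pi.single k 1) = v k := fun k => by rw [hL, dotProduct_single_one]
  simp only [charFunDual_pi, charFunDual_gaussianReal, ContinuousLinearMap.comp_apply,
    ContinuousLinearMap.single_apply, hv, ← Complex.exp_sum, ← Complex.ofReal_sum, dotProduct,
    ← Finset.sum_div, Finset.sum_neg_distrib, sq]

open scoped MatrixOrder Matrix.Norms.L2Operator in
lemma exists_eq_mul_transpose {S : Matrix ι ι ℝ} (hS : S.PosSemidef) :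
    ∃ V : Matrix ι ι ℝ, S = V * Vᵀ := by
  classical
  exact CStarAlgebra.nonneg_iff_eq_mul_star_self.mp hS.nonneg

lemma charFunDual_map_mulVec_pi_gaussianReal (U : Matrix ι κ ℝ) (L : StrongDual ℝ (ι → ℝ))
    {l : ι → ℝ} (hL : ∀ w, L w = l ⬝ᵥ w) :
    charFunDual ((Measure.pi fun _ => gaussianReal 0 1).map U.mulVec) L =
      Complex.exp ((-(l ⬝ᵥ (U * Uᵀ) *ᵥ l) / 2 : ℝ)) := by
  rw [show U.mulVec = (Matrix.mulVecLin U).toContinuousLinearMap from rfl, charFunDual_map,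
    charFunDual_pi_gaussianReal _ (v := l ᵥ* U) fun z => ?_]
  · rw [← Matrix.mulVec_mulVec, Matrix.dotProduct_mulVec l, Matrix.mulVec_transpose]
  · exact (hL _).trans (Matrix.dotProduct_mulVec l U z)

lemma map_mulVec_pi_gaussianReal_congr {ι : Type*} [Finite ι] {U : Matrix ι κ ℝ}
    {V : Matrix ι κ' ℝ} (h : U * Uᵀ = V * Vᵀ) :
    (Measure.pi fun _ => gaussianReal 0 1).map U.mulVec =
      (Measure.pi fun _ => gaussianReal 0 1).map V.mulVec := by
  classical
  cases nonempty_fintype ι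
  have : IsProbabilityMeasure ((Measure.pi fun _ => gaussianReal 0 1).map U.mulVec) :=
    Measure.isProbabilityMeasure_map (by fun_prop)
  have : IsProbabilityMeasure ((Measure.pi fun _ => gaussianReal 0 1).map V.mulVec) :=
    Measure.isProbabilityMeasure_map (by fun_prop)
  refine Measure.ext_of_charFunDual (funext fun L => ?_)
  have hL : ∀ w, L w = (fun i => L (Pi.single i 1)) ⬝ᵥ w := fun w => by
    conv_lhs => rw [pi_eq_sum_univ' w]
    simp [dotProduct, mul_comm]
  rw [charFunDual_map_mulVec_pi_gaussianReal U L hL, charFunDual_map_mulVec_pi_gaussianReal V L hL,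
    h]

lemma dotProduct_mul_transpose_inv_mulVec [DecidableEq ι] {V : Matrix ι ι ℝ} (hV : IsUnit V.det)
    (z : ι → ℝ) : V *ᵥ z ⬝ᵥ (V * Vᵀ)⁻¹ *ᵥ (V *ᵥ z) = z ⬝ᵥ z := by
  rw [Matrix.mul_inv_rev, Matrix.mulVec_mulVec, Matrix.mul_assoc, Matrix.nonsing_inv_mul _ hV,
    Matrix.mul_one, Matrix.dotProduct_mulVec, ← Matrix.transpose_nonsing_inv,
    Matrix.vecMul_transpose, Matrix.mulVec_mulVec, Matrix.nonsing_inv_mul _ hV, Matrix.one_mulVec]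

lemma map_mulVec_pi_gaussianReal_of_square [DecidableEq ι] {V : Matrix ι ι ℝ} (hV : V.det ≠ 0) :
    (Measure.pi fun _ => gaussianReal 0 1).map V.mulVec =
      volume.withDensity fun w => ENNReal.ofReal ((√(2 * Real.pi))⁻¹ ^ Fintype.card ι * |V.det|⁻¹ *
        Real.exp (-(w ⬝ᵥ (V * Vᵀ)⁻¹ *ᵥ w) / 2)) := by
  set c := (√(2 * Real.pi))⁻¹ ^ Fintype.card ι
  set g : (ι → ℝ) → ENNReal :=
    fun w => ENNReal.ofReal (c * Real.exp (-(w ⬝ᵥ (V * Vᵀ)⁻¹ *ᵥ w) / 2)) with hg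
  have hVm : Measurable V.mulVec := by fun_prop
  ext s hs
  calc (Measure.pi fun _ => gaussianReal 0 1).map V.mulVec s
      = ∫⁻ z in V.mulVec ⁻¹' s, g (V *ᵥ z) := by
        rw [Measure.map_apply hVm hs, pi_gaussianReal_eq_withDensity, withDensity_apply _ (hVm hs)]
        simp only [hg, dotProduct_mul_transpose_inv_mulVec hV.isUnit, c]
    _ = ∫⁻ w in s, g w ∂(volume.map V.mulVec) := by rw [setLIntegral_map hs (by fun_prop) hVm]
    _ = ENNReal.ofReal |V.det⁻¹| * ∫⁻ w in s, g w := by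
        rw [show V.mulVec = Matrix.toLin' V from rfl,
          Real.map_matrix_volume_pi_eq_smul_volume_pi hV, Measure.restrict_smul,
          lintegral_smul_measure, smul_eq_mul]
    _ = _ := by
        rw [← lintegral_const_mul _ (by fun_prop), withDensity_apply _ hs]
        refine lintegral_congr fun w => ?_
        rw [hg, abs_inv, ← ENNReal.ofReal_mul (by positivity), mul_left_comm, mul_assoc c]

lemma map_mulVec_pi_gaussianReal [DecidableEq ι] {U : Matrix ι κ ℝ} (hU : (U * Uᵀ).det ≠ 0) :
    (Measure.pi fun _ => gaussianReal 0 1).map U.mulVec =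
      volume.withDensity fun w => ENNReal.ofReal ((√(2 * Real.pi))⁻¹ ^ Fintype.card ι *
        (√(U * Uᵀ).det)⁻¹ * Real.exp (-(w ⬝ᵥ (U * Uᵀ)⁻¹ *ᵥ w) / 2)) := by
  obtain ⟨V, hUV⟩ := exists_eq_mul_transpose (Matrix.posSemidef_self_mul_conjTranspose U)
  rw [Matrix.conjTranspose_eq_transpose_of_trivial] at hUV
  have hdet : (U * Uᵀ).det = V.det ^ 2 := by rw [hUV, Matrix.det_mul, Matrix.det_transpose, sq]
  have hV : V.det ≠ 0 := fun h => hU (by simp [hdet, h])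
  rw [map_mulVec_pi_gaussianReal_congr hUV, map_mulVec_pi_gaussianReal_of_square hV, hdet,
    Real.sqrt_sq_eq_abs, hUV]

end GaussianVectors

lemma measurePreserving_uncurry {α β X : Type*} [Fintype α] [Fintype β] [MeasurableSpace X]
    (μ : Measure X) [SigmaFinite μ] :
    MeasurePreserving Function.uncurry (Measure.pi fun _ : α => Measure.pi fun _ : β => μ)
      (Measure.pi fun _ : α × β => μ) := by
  have hm : Measurable (Function.uncurry : (α → β → X) → α × β → X) :=
    measurable_pi_lambda _ fun p => by unfold Function.uncurry; fun_prop
  refine ⟨hm, (Measure.pi_eq fun s hs => ?_).symm⟩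
  have h : Function.uncurry ⁻¹' Set.univ.pi s =
      Set.univ.pi fun i : α => Set.univ.pi fun j : β => s (i, j) := by
    ext
    simp [Set.mem_pi]
  rw [Measure.map_apply hm (.univ_pi hs), h]
  simp only [Measure.pi_pi, Fintype.prod_prod_type]

section PositiveOrthant

lemma volume_restrict_forall_pos {ι : Type*} [Fintype ι] :
    (volume : Measure (ι → ℝ)).restrict {w | ∀ i, 0 < w i} = Measure.pi fun _ => vol₊ := by
  have h : {w : ι → ℝ | ∀ i, 0 < w i} = Set.univ.pi fun _ => Set.Ioi 0 := by
    ext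
    simp
  rw [h, volume_pi, Measure.restrict_pi_pi]

open scoped Kronecker

variable {α β σ τ : Type*} [Fintype α] [Fintype β]

lemma uncurry_mul_mul_transpose (C : Matrix σ α ℝ) (X : Matrix τ β ℝ) (a : α → β → ℝ) :
    Function.uncurry (C * Matrix.of a * Xᵀ) = (C ⊗ₖ X) *ᵥ Function.uncurry a := by
  ext ⟨s, t⟩
  change (C * Matrix.of a * Xᵀ) s t = ∑ p : α × β, C s p.1 * X t p.2 * a p.1 p.2
  simp only [Matrix.mul_apply, Matrix.transpose_apply, Matrix.of_apply, Finset.sum_mul,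
    Fintype.sum_prod_type, mul_right_comm]
  exact Finset.sum_comm

lemma gaussianMatrix_mul_mul_transpose_pos [Fintype σ] [Fintype τ] [DecidableEq σ]
    [DecidableEq τ] {C : Matrix σ α ℝ} {X : Matrix τ β ℝ} (hC : (C * Cᵀ).det ≠ 0)
    (hX : (X * Xᵀ).det ≠ 0) :
    gaussianMatrix α β {a | ∀ s t, 0 < (C * Matrix.of a * Xᵀ) s t} =
      ENNReal.ofReal ((√(2 * Real.pi))⁻¹ ^ (Fintype.card σ * Fintype.card τ) *
        (√((C * Cᵀ).det ^ Fintype.card τ * (X * Xᵀ).det ^ Fintype.card σ))⁻¹) *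
      ∫⁻ w : σ → τ → ℝ, ENNReal.ofReal (Real.exp (-(Function.uncurry w ⬝ᵥ
        ((C * Cᵀ)⁻¹ ⊗ₖ (X * Xᵀ)⁻¹) *ᵥ Function.uncurry w) / 2))
        ∂Measure.pi fun _ => Measure.pi fun _ => vol₊ := by
  have hgram : (C ⊗ₖ X) * (C ⊗ₖ X)ᵀ = (C * Cᵀ) ⊗ₖ (X * Xᵀ) := by
    rw [← Matrix.kroneckerMap_transpose, ← Matrix.mul_kronecker_mul]
  have hdet : ((C ⊗ₖ X) * (C ⊗ₖ X)ᵀ).det =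
      (C * Cᵀ).det ^ Fintype.card τ * (X * Xᵀ).det ^ Fintype.card σ := by
    rw [hgram, Matrix.det_kronecker]
  have hpos : MeasurableSet {w : σ × τ → ℝ | ∀ p, 0 < w p} := by measurability
  have hevent : {a : α → β → ℝ | ∀ s t, 0 < (C * Matrix.of a * Xᵀ) s t} =
      Function.uncurry ⁻¹' ((C ⊗ₖ X).mulVec ⁻¹' {w | ∀ p, 0 < w p}) := by
    ext a
    simp only [Set.mem_preimage, Set.mem_ofPred_eq, ← uncurry_mul_mul_transpose, Prod.forall]
    rfl
  rw [hevent, (measurePreserving_uncurry _).measure_preimage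
      (measurableSet_preimage (by fun_prop) hpos).nullMeasurableSet,
    ← Measure.map_apply (by fun_prop) hpos, map_mulVec_pi_gaussianReal (by rw [hdet]; positivity),
    withDensity_apply _ hpos, volume_restrict_forall_pos, hdet, hgram, Matrix.inv_kronecker,
    (measurePreserving_uncurry _).lintegral_comp (f := fun w => ENNReal.ofReal (Real.exp (-(w ⬝ᵥ
      ((C * Cᵀ)⁻¹ ⊗ₖ (X * Xᵀ)⁻¹) *ᵥ w) / 2))) (by fun_prop),
    ← lintegral_const_mul _ (by fun_prop), Fintype.card_prod]
  exact lintegral_congr fun w => ENNReal.ofReal_mul (by positivity)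

end PositiveOrthant

section QuadrantIntegrals

lemma lintegral_Ioi_ofReal_of_hasDerivAt_of_nonneg {F F' : ℝ → ℝ} {a l : ℝ}
    (hderiv : ∀ x ∈ Set.Ici a, HasDerivAt F (F' x) x)
    (hpos : ∀ x ∈ Set.Ioi a, 0 ≤ F' x) (hl : Filter.Tendsto F Filter.atTop (nhds l)) :
    ∫⁻ x in Set.Ioi a, ENNReal.ofReal (F' x) = ENNReal.ofReal (l - F a) := by
  rw [← integral_Ioi_of_hasDerivAt_of_nonneg' hderiv hpos hl, ofReal_integral_eq_lintegral_ofReal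
    (integrableOn_Ioi_deriv_of_nonneg' hderiv hpos hl)
    (ae_restrict_of_forall_mem measurableSet_Ioi hpos)]

lemma lintegral_Ioi_mul_exp_neg_mul_sq {k : ℝ} (hk : 0 < k) :
    ∫⁻ a in Set.Ioi 0, ENNReal.ofReal (a * Real.exp (-(k * a ^ 2 / 2))) = ENNReal.ofReal k⁻¹ := by
  have hderiv : ∀ a ∈ Set.Ici (0 : ℝ), HasDerivAt (fun a => -Real.exp (-(k * a ^ 2 / 2)) / k)
      (a * Real.exp (-(k * a ^ 2 / 2))) a := fun a _ => by
    refine ((((hasDerivAt_pow 2 a).const_mul k).div_const 2).fun_neg.exp.fun_neg.div_const k)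
      |>.congr_deriv ?_
    field_simp
    norm_num [mul_comm]
  have hlim : Filter.Tendsto (fun a : ℝ => -Real.exp (-(k * a ^ 2 / 2)) / k) Filter.atTop
      (nhds 0) := by
    have h : Filter.Tendsto (fun a : ℝ => k * a ^ 2 / 2) Filter.atTop Filter.atTop :=
      ((Filter.tendsto_pow_atTop two_ne_zero).const_mul_atTop hk).atTop_div_const two_pos
    simpa using (Real.tendsto_exp_neg_atTop_nhds_zero.comp h).neg.div_const k
  rw [lintegral_Ioi_ofReal_of_hasDerivAt_of_nonneg hderiv
    (fun a ha => mul_nonneg (le_of_lt ha) (Real.exp_nonneg _)) hlim]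
  simp [neg_div]

lemma lintegral_Ioi_comp_mul_left {a : ℝ} (ha : 0 < a) (f : ℝ → ENNReal) (hf : Measurable f) :
    ENNReal.ofReal a * ∫⁻ t in Set.Ioi 0, f (a * t) = ∫⁻ b in Set.Ioi 0, f b := by
  have hpre : (a * ·) ⁻¹' Set.Ioi 0 = Set.Ioi (0 : ℝ) := by ext; simp [ha]
  conv_rhs => rw [← Real.smul_map_volume_mul_left ha.ne', abs_of_pos ha, Measure.restrict_smul,
    lintegral_smul_measure, setLIntegral_map measurableSet_Ioi hf (by fun_prop), hpre, smul_eq_mul]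

lemma lintegral_quadrant_eq_lintegral_slope {f : ℝ → ℝ → ENNReal}
    (hf : Measurable (Function.uncurry f)) :
    ∫⁻ a, ∫⁻ b, f a b ∂vol₊ ∂vol₊ = ∫⁻ t, ∫⁻ a, ENNReal.ofReal a * f a (a * t) ∂vol₊ ∂vol₊ := by
  rw [lintegral_lintegral_swap (f := fun t a => ENNReal.ofReal a * f a (a * t))
    ((by fun_prop : Measurable fun p : ℝ × ℝ => ENNReal.ofReal p.2).mul
      (hf.comp (by fun_prop : Measurable fun p : ℝ × ℝ => (p.2, p.2 * p.1)))).aemeasurable]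
  refine setLIntegral_congr_fun measurableSet_Ioi fun a ha => ?_
  have hfa : Measurable (f a) := hf.of_uncurry_left
  change _ = ∫⁻ t, ENNReal.ofReal a * f a (a * t) ∂vol₊
  rw [lintegral_const_mul _ (by fun_prop), lintegral_Ioi_comp_mul_left ha _ hfa]

lemma lintegral_quadrant_exp_neg_quadratic {c k : ℝ} (hc : -1 < c) (hk : 0 < k) :
    ∫⁻ a, ∫⁻ b, ENNReal.ofReal (Real.exp (-(k * (a ^ 2 + 2 * c * (a * b) + b ^ 2) / 2)))
        ∂vol₊ ∂vol₊ =
      ENNReal.ofReal k⁻¹ * ∫⁻ t, ENNReal.ofReal (t ^ 2 + 2 * c * t + 1)⁻¹ ∂vol₊ := by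
  rw [lintegral_quadrant_eq_lintegral_slope (by unfold Function.uncurry; fun_prop),
    ← lintegral_const_mul _ (by fun_prop)]
  refine setLIntegral_congr_fun measurableSet_Ioi fun t (ht : 0 < t) => ?_
  have hq : 0 < t ^ 2 + 2 * c * t + 1 := by nlinarith [sq_nonneg (t - 1)]
  rw [← ENNReal.ofReal_mul (by positivity), ← mul_inv,
    ← lintegral_Ioi_mul_exp_neg_mul_sq (by positivity)]
  refine setLIntegral_congr_fun measurableSet_Ioi fun a (ha : 0 < a) => ?_
  rw [← ENNReal.ofReal_mul ha.le]
  congr 4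
  ring

lemma lintegral_Ioi_inv_quadratic {c : ℝ} (hc : c ∈ Set.Ioo (-1) 1) :
    ∫⁻ t in Set.Ioi 0, ENNReal.ofReal (t ^ 2 + 2 * c * t + 1)⁻¹ =
      ENNReal.ofReal (Real.arccos c / √(1 - c ^ 2)) := by
  have hs : 0 < 1 - c ^ 2 := by nlinarith [hc.1, hc.2]
  have hs' : 0 < √(1 - c ^ 2) := Real.sqrt_pos.2 hs
  have hss : √(1 - c ^ 2) ^ 2 = 1 - c ^ 2 := Real.sq_sqrt hs.le
  set s := √(1 - c ^ 2) with hsdef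
  have hq : ∀ t : ℝ, t ^ 2 + 2 * c * t + 1 = s ^ 2 + (t + c) ^ 2 := fun t => by rw [hss]; ring
  have hderiv : ∀ t ∈ Set.Ici (0 : ℝ), HasDerivAt (fun t => Real.arctan ((t + c) / s) / s)
      (t ^ 2 + 2 * c * t + 1)⁻¹ t := fun t _ => by
    refine ((((hasDerivAt_id t).add_const c).div_const s).arctan.div_const s).congr_deriv ?_
    rw [hq]
    simp only [id]
    field_simp
  have hlim : Filter.Tendsto (fun t => Real.arctan ((t + c) / s) / s) Filter.atTop
      (nhds (Real.pi / 2 / s)) :=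
    ((Real.tendsto_arctan_atTop.mono_right nhdsWithin_le_nhds).comp <|
      (Filter.tendsto_atTop_add_const_right _ c Filter.tendsto_id).atTop_div_const hs').div_const s
  rw [lintegral_Ioi_ofReal_of_hasDerivAt_of_nonneg hderiv (fun t _ => by rw [hq]; positivity) hlim,
    zero_add, hsdef, ← Real.arcsin_eq_arctan hc, ← sub_div, Real.arccos]

lemma lintegral_Ioi_inv_one_add_sq :
    ∫⁻ t in Set.Ioi (0 : ℝ), ENNReal.ofReal ((1 + t) ^ 2)⁻¹ = 1 := by
  have hderiv : ∀ t ∈ Set.Ici (0 : ℝ), HasDerivAt (fun t => -(1 + t)⁻¹) ((1 + t) ^ 2)⁻¹ t :=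
      fun t (ht : 0 ≤ t) => by
    have ht' : 1 + t ≠ 0 := by positivity
    refine (((hasDerivAt_id t).const_add 1).fun_inv ht').fun_neg.congr_deriv ?_
    simp [neg_div]
  have hlim : Filter.Tendsto (fun t : ℝ => -(1 + t)⁻¹) Filter.atTop (nhds 0) := by
    simpa using (tendsto_inv_atTop_zero.comp
      (Filter.tendsto_atTop_add_const_left _ (1 : ℝ) Filter.tendsto_id)).neg
  rw [lintegral_Ioi_ofReal_of_hasDerivAt_of_nonneg hderiv (fun t _ => by positivity) hlim]
  simp

lemma lintegral_quadrant_exp_neg_quadratic_eq_arccos {c k : ℝ} (hc : c ∈ Set.Ioo (-1) 1)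
    (hk : 0 < k) :
    ∫⁻ a, ∫⁻ b, ENNReal.ofReal (Real.exp (-(k * (a ^ 2 + 2 * c * (a * b) + b ^ 2) / 2)))
        ∂vol₊ ∂vol₊ =
      ENNReal.ofReal (Real.arccos c / (k * √(1 - c ^ 2))) := by
  rw [lintegral_quadrant_exp_neg_quadratic hc.1 hk, lintegral_Ioi_inv_quadratic hc,
    ← ENNReal.ofReal_mul (by positivity)]
  congr 1
  field_simp

lemma lintegral_quadrant_exp_neg_sq_add {k : ℝ} (hk : 0 < k) :
    ∫⁻ a, ∫⁻ b, ENNReal.ofReal (Real.exp (-(k * (a + b) ^ 2 / 2))) ∂vol₊ ∂vol₊ =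
      ENNReal.ofReal k⁻¹ := by
  have hsq : ∀ a b : ℝ, a ^ 2 + 2 * 1 * (a * b) + b ^ 2 = (a + b) ^ 2 := fun a b => by ring
  have hsq' : ∀ t : ℝ, t ^ 2 + 2 * 1 * t + 1 = (1 + t) ^ 2 := fun t => by ring
  have h := lintegral_quadrant_exp_neg_quadratic (c := 1) (by norm_num) hk
  simp only [hsq, hsq', lintegral_Ioi_inv_one_add_sq] at h
  rwa [mul_one] at h

end QuadrantIntegrals

section FinTwoIntegrals

variable {E : Type*} [MeasurableSpace E] {μ : Measure E}

lemma lintegral_pi_unit {f : (Unit → E) → ENNReal} (hf : Measurable f) :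
    ∫⁻ w, f w ∂Measure.pi (fun _ => μ) = ∫⁻ a, f (fun _ => a) ∂μ :=
  ((measurePreserving_funUnique μ Unit).symm.lintegral_comp hf).symm

variable [SigmaFinite μ]

lemma lintegral_pi_fin_two {f : (Fin 2 → E) → ENNReal} (hf : Measurable f) :
    ∫⁻ w, f w ∂Measure.pi (fun _ => μ) = ∫⁻ a, ∫⁻ b, f ![a, b] ∂μ ∂μ := by
  rw [← (measurePreserving_finTwoArrow μ).symm.lintegral_comp hf, lintegral_prod _ (by fun_prop)]
  rfl

lemma lintegral_pi_fin_two_mul {f g : E → ENNReal} (hf : Measurable f) (hg : Measurable g) :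
    ∫⁻ w : Fin 2 → E, f (w 0) * g (w 1) ∂Measure.pi (fun _ => μ) =
      (∫⁻ a, f a ∂μ) * ∫⁻ a, g a ∂μ := by
  rw [lintegral_pi_fin_two (by fun_prop)]
  simp only [Matrix.cons_val_zero, Matrix.cons_val_one, lintegral_const_mul _ hg,
    lintegral_mul_const _ hf]

lemma lintegral_pi_pi_fin_two_mul_cols {f g : E → E → ENNReal}
    (hf : Measurable (Function.uncurry f)) (hg : Measurable (Function.uncurry g)) :
    ∫⁻ w : Fin 2 → Fin 2 → E, f (w 0 0) (w 1 0) * g (w 0 1) (w 1 1)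
        ∂Measure.pi (fun _ => Measure.pi fun _ => μ) =
      (∫⁻ a, ∫⁻ b, f a b ∂μ ∂μ) * ∫⁻ a, ∫⁻ b, g a b ∂μ ∂μ := by
  have hmeas : Measurable fun w : Fin 2 → Fin 2 → E => f (w 0 0) (w 1 0) * g (w 0 1) (w 1 1) :=
    (hf.comp (f := fun w : Fin 2 → Fin 2 → E => (w 0 0, w 1 0)) (by fun_prop)).mul
      (hg.comp (f := fun w : Fin 2 → Fin 2 → E => (w 0 1, w 1 1)) (by fun_prop))
  rw [lintegral_pi_fin_two hmeas]
  simp only [Matrix.cons_val_zero, Matrix.cons_val_one,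
    lintegral_pi_fin_two_mul hf.of_uncurry_left hg.of_uncurry_left]
  exact lintegral_pi_fin_two_mul hf.lintegral_prod_right' hg.lintegral_prod_right'

end FinTwoIntegrals

section OrthantProbabilities

variable {α β σ : Type*} [Fintype α] [Fintype β]

lemma of_vec_mul_transpose (x y : β → ℝ) :
    Matrix.of ![x, y] * (Matrix.of ![x, y])ᵀ = !![x ⬝ᵥ x, x ⬝ᵥ y; x ⬝ᵥ y, y ⬝ᵥ y] := by
  ext i j
  fin_cases i <;> fin_cases j <;> simp [Matrix.mul_apply, dotProduct, mul_comm]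

lemma det_correlation (ρ : ℝ) : !![1, ρ; ρ, 1].det = 1 - ρ ^ 2 := by
  rw [Matrix.det_fin_two_of, one_mul, sq]

lemma inv_correlation (ρ : ℝ) : !![1, ρ; ρ, 1]⁻¹ = (1 - ρ ^ 2)⁻¹ • !![1, -ρ; -ρ, 1] := by
  rw [Matrix.inv_def, Matrix.adjugate_fin_two_of, det_correlation, Ring.inverse_eq_inv']

lemma dotProduct_correlation_mulVec (ρ : ℝ) (u v : Fin 2 → ℝ) :
    u ⬝ᵥ !![1, ρ; ρ, 1] *ᵥ v = u 0 * v 0 + ρ * (u 0 * v 1 + u 1 * v 0) + u 1 * v 1 := by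
  simp only [dotProduct, Matrix.mulVec, Fin.sum_univ_two, Matrix.of_apply, Matrix.cons_val_zero,
    Matrix.cons_val_one]
  ring

open scoped Kronecker in
lemma uncurry_dotProduct_kronecker_mulVec_uncurry (A : Matrix α α ℝ) (B : Matrix β β ℝ)
    (w : α → β → ℝ) :
    Function.uncurry w ⬝ᵥ (A ⊗ₖ B) *ᵥ Function.uncurry w =
      ∑ s, ∑ t, A s t * (w s ⬝ᵥ B *ᵥ w t) := by
  simp only [dotProduct, Matrix.mulVec, Fintype.sum_prod_type, Matrix.kroneckerMap_apply,
    Function.uncurry, Finset.mul_sum]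
  refine Finset.sum_congr rfl fun s _ => Finset.sum_comm.trans ?_
  simp only [mul_left_comm, mul_assoc]

lemma gaussianMatrix_forall_pos_pos [Fintype σ] [DecidableEq σ] {C : Matrix σ α ℝ}
    (hC : (C * Cᵀ).det ≠ 0) {x y : β → ℝ} (hx : x ⬝ᵥ x = 1) (hy : y ⬝ᵥ y = 1)
    (hxy : x ⬝ᵥ y ∈ Set.Ioo (-1) 1) :
    gaussianMatrix α β {a | ∀ s, 0 < C s ⬝ᵥ Matrix.of a *ᵥ x ∧ 0 < C s ⬝ᵥ Matrix.of a *ᵥ y} =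
      ENNReal.ofReal (((2 * Real.pi) ^ Fintype.card σ *
        (|(C * Cᵀ).det| * √((1 - (x ⬝ᵥ y) ^ 2) ^ Fintype.card σ)))⁻¹) *
      ∫⁻ w : σ → Fin 2 → ℝ, ENNReal.ofReal (Real.exp (-((1 - (x ⬝ᵥ y) ^ 2)⁻¹ *
        ∑ s, ∑ t, (C * Cᵀ)⁻¹ s t * (w s ⬝ᵥ !![1, -(x ⬝ᵥ y); -(x ⬝ᵥ y), 1] *ᵥ w t)) / 2))
        ∂Measure.pi fun _ => Measure.pi fun _ => vol₊ := by
  have hX : Matrix.of ![x, y] * (Matrix.of ![x, y])ᵀ = !![1, x ⬝ᵥ y; x ⬝ᵥ y, 1] := by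
    rw [of_vec_mul_transpose, hx, hy]
  have hs : 0 < 1 - (x ⬝ᵥ y) ^ 2 := by nlinarith [hxy.1, hxy.2]
  have hevent : {a | ∀ s, 0 < C s ⬝ᵥ Matrix.of a *ᵥ x ∧ 0 < C s ⬝ᵥ Matrix.of a *ᵥ y} =
      {a | ∀ s t, 0 < (C * Matrix.of a * (Matrix.of ![x, y])ᵀ) s t} := by
    simp only [Matrix.mul_assoc C, Fin.forall_fin_two]
    rfl
  rw [hevent, gaussianMatrix_mul_mul_transpose_pos hC (by rw [hX, det_correlation]; exact hs.ne'),
    hX, det_correlation, inv_correlation, Matrix.kronecker_smul, Fintype.card_fin,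
    Real.sqrt_mul (sq_nonneg _), Real.sqrt_sq_eq_abs, inv_pow, mul_comm _ 2, pow_mul,
    Real.sq_sqrt Real.two_pi_pos.le, ← mul_inv]
  simp only [Matrix.smul_mulVec, dotProduct_smul, smul_eq_mul,
    uncurry_dotProduct_kronecker_mulVec_uncurry]

/-- **Sheppard's formula** -/
lemma gaussianMatrix_pos_pos {c : α → ℝ} (hc : c ≠ 0) {x y : β → ℝ} (hx : x ⬝ᵥ x = 1)
    (hy : y ⬝ᵥ y = 1) (hxy : x ⬝ᵥ y ∈ Set.Ioo (-1) 1) :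
    gaussianMatrix α β {a | 0 < c ⬝ᵥ Matrix.of a *ᵥ x ∧ 0 < c ⬝ᵥ Matrix.of a *ᵥ y} =
      ENNReal.ofReal (Real.arccos (-(x ⬝ᵥ y)) / (2 * Real.pi)) := by
  set C : Matrix Unit α ℝ := Matrix.of fun _ => c
  set v := c ⬝ᵥ c
  have hv0 : 0 < v := (Finset.sum_nonneg fun i _ => mul_self_nonneg (c i)).lt_of_ne'
    (dotProduct_self_eq_zero.not.2 hc)
  have hs : 0 < 1 - (x ⬝ᵥ y) ^ 2 := by nlinarith [hxy.1, hxy.2]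
  have hdet : (C * Cᵀ).det = v := Matrix.det_unique _
  have hinv : (C * Cᵀ)⁻¹ = Matrix.of fun _ _ => v⁻¹ := Matrix.inv_eq_right_inv <| by
    ext
    change ∑ _ : Unit, v * v⁻¹ = 1
    simp [hv0.ne']
  have hevent : {a | 0 < c ⬝ᵥ Matrix.of a *ᵥ x ∧ 0 < c ⬝ᵥ Matrix.of a *ᵥ y} =
      {a | ∀ s, 0 < C s ⬝ᵥ Matrix.of a *ᵥ x ∧ 0 < C s ⬝ᵥ Matrix.of a *ᵥ y} :=
    Set.ext fun a => (forall_const Unit).symm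
  have hform : ∀ a b : ℝ, (1 - (x ⬝ᵥ y) ^ 2)⁻¹ * ∑ _ : Unit, ∑ _ : Unit, v⁻¹ *
      (![a, b] ⬝ᵥ !![1, -(x ⬝ᵥ y); -(x ⬝ᵥ y), 1] *ᵥ ![a, b]) =
        (v * (1 - (x ⬝ᵥ y) ^ 2))⁻¹ * (a ^ 2 + 2 * -(x ⬝ᵥ y) * (a * b) + b ^ 2) := fun a b => by
    rw [Fintype.sum_unique, Fintype.sum_unique, dotProduct_correlation_mulVec]
    simp only [Matrix.cons_val_zero, Matrix.cons_val_one, mul_inv]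
    ring
  rw [hevent, gaussianMatrix_forall_pos_pos (hdet ▸ hv0.ne') hx hy hxy, hinv, hdet,
    lintegral_pi_unit (by fun_prop), lintegral_pi_fin_two (by fun_prop)]
  simp only [Matrix.of_apply, hform, neg_div]
  rw [lintegral_quadrant_exp_neg_quadratic_eq_arccos ⟨neg_lt_neg hxy.2, neg_lt.1 hxy.1⟩
      (by positivity),
    ← ENNReal.ofReal_mul (by positivity), abs_of_pos hv0, neg_sq]
  simp only [Fintype.card_unit, pow_one]
  congr 1
  have := Real.sqrt_pos.2 hs
  have hsq := Real.sq_sqrt hs.le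
  set s := √(1 - (x ⬝ᵥ y) ^ 2)
  rw [← hsq]
  field_simp

end OrthantProbabilities

section DoubleWin

lemma lintegral_quadrant_exp_neg_sq_sub_mul_add_sq {k : ℝ} (hk : 0 < k) :
    ∫⁻ a, ∫⁻ b, ENNReal.ofReal (Real.exp (-(k * (a ^ 2 - a * b + b ^ 2) / 2))) ∂vol₊ ∂vol₊ =
      ENNReal.ofReal (4 * Real.pi / (3 * √3) / k) := by
  have harccos : Real.arccos (-(1 / 2)) = 2 * Real.pi / 3 := by
    rw [Real.arccos_neg, ← Real.cos_pi_div_three, Real.arccos_cos] <;> linarith [Real.pi_pos]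
  have hsqrt : √(1 - (-(1 / 2)) ^ 2) = √3 / 2 := by
    rw [show (1 - (-(1 / 2)) ^ 2 : ℝ) = 3 / 2 ^ 2 by norm_num, Real.sqrt_div' _ (by norm_num),
      Real.sqrt_sq two_pos.le]
  have hquad : ∀ a b : ℝ, a ^ 2 - a * b + b ^ 2 = a ^ 2 + 2 * -(1 / 2) * (a * b) + b ^ 2 :=
    fun a b => by ring
  simp only [hquad]
  rw [lintegral_quadrant_exp_neg_quadratic_eq_arccos (by norm_num) hk, harccos, hsqrt]
  congr 1
  field_simp
  norm_num

lemma ofReal_exp_neg_mul_add_div_two (k p q : ℝ) :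
    ENNReal.ofReal (Real.exp (-(k * (p + q) / 2))) =
      ENNReal.ofReal (Real.exp (-(k * p / 2))) * ENNReal.ofReal (Real.exp (-(k * q / 2))) := by
  rw [← ENNReal.ofReal_mul (Real.exp_nonneg _), ← Real.exp_add]
  congr 2
  ring

lemma lintegral_exp_neg_cols {k : ℝ} (hk : 0 < k) :
    ∫⁻ w : Fin 2 → Fin 2 → ℝ, ENNReal.ofReal (Real.exp (-(k *
        ((w 0 0 ^ 2 - w 0 0 * w 1 0 + w 1 0 ^ 2) + (w 0 1 ^ 2 - w 0 1 * w 1 1 + w 1 1 ^ 2)) / 2)))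
        ∂Measure.pi (fun _ => Measure.pi fun _ => vol₊) =
      ENNReal.ofReal (16 * Real.pi ^ 2 / 27 / k ^ 2) := by
  rw [lintegral_congr fun w => ofReal_exp_neg_mul_add_div_two k _ _,
    lintegral_pi_pi_fin_two_mul_cols
      (f := fun a b => ENNReal.ofReal (Real.exp (-(k * (a ^ 2 - a * b + b ^ 2) / 2))))
      (g := fun a b => ENNReal.ofReal (Real.exp (-(k * (a ^ 2 - a * b + b ^ 2) / 2))))
      (by unfold Function.uncurry; fun_prop) (by unfold Function.uncurry; fun_prop),
    lintegral_quadrant_exp_neg_sq_sub_mul_add_sq hk, ← ENNReal.ofReal_mul (by positivity)]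
  congr 1
  field_simp
  norm_num

lemma lintegral_exp_neg_rows {k : ℝ} (hk : 0 < k) :
    ∫⁻ w : Fin 2 → Fin 2 → ℝ, ENNReal.ofReal (Real.exp (-(k *
        ((w 0 0 + w 0 1) ^ 2 + (w 1 0 + w 1 1) ^ 2) / 2)))
        ∂Measure.pi (fun _ => Measure.pi fun _ => vol₊) =
      ENNReal.ofReal (1 / k ^ 2) := by
  rw [lintegral_congr fun w => ofReal_exp_neg_mul_add_div_two k _ _,
    lintegral_pi_fin_two_mul
      (f := fun u : Fin 2 → ℝ => ENNReal.ofReal (Real.exp (-(k * (u 0 + u 1) ^ 2 / 2))))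
      (g := fun u => ENNReal.ofReal (Real.exp (-(k * (u 0 + u 1) ^ 2 / 2))))
      (by fun_prop) (by fun_prop),
    lintegral_pi_fin_two (by fun_prop)]
  simp only [Matrix.cons_val_zero, Matrix.cons_val_one]
  rw [lintegral_quadrant_exp_neg_sq_add hk, ← ENNReal.ofReal_mul (by positivity)]
  congr 1
  field_simp

lemma exp_neg_mul_add_mul_le {k r : ℝ} (hk : 0 < k) (hr0 : 0 ≤ r) (hr1 : r ≤ 1) (a b c d : ℝ) :
    Real.exp (-(k * ((a ^ 2 - a * c + c ^ 2) + (b ^ 2 - b * d + d ^ 2) +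
        r * (2 * (a * b) - (a * d + b * c) + 2 * (c * d))) / 2)) ≤
      (1 - r) * Real.exp (-(k * ((a ^ 2 - a * c + c ^ 2) + (b ^ 2 - b * d + d ^ 2)) / 2)) +
        r * Real.exp (-(k / 2 * ((a + b) ^ 2 + (c + d) ^ 2) / 2)) := by
  refine le_trans (Real.exp_le_exp.2 ?_)
    (convexOn_exp.2 (Set.mem_univ _) (Set.mem_univ _) (sub_nonneg.2 hr1) hr0 (sub_add_cancel 1 r))
  rw [smul_eq_mul, smul_eq_mul]
  nlinarith [mul_nonneg (mul_nonneg hk.le hr0) (sq_nonneg (a + b - (c + d)))]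

lemma lintegral_exp_neg_add_mul_le {k r : ℝ} (hk : 0 < k) (hr0 : 0 ≤ r) (hr1 : r ≤ 1) :
    ∫⁻ w : Fin 2 → Fin 2 → ℝ, ENNReal.ofReal (Real.exp (-(k *
        ((w 0 0 ^ 2 - w 0 0 * w 1 0 + w 1 0 ^ 2) + (w 0 1 ^ 2 - w 0 1 * w 1 1 + w 1 1 ^ 2) +
          r * (2 * (w 0 0 * w 0 1) - (w 0 0 * w 1 1 + w 0 1 * w 1 0) + 2 * (w 1 0 * w 1 1))) / 2)))
        ∂Measure.pi (fun _ => Measure.pi fun _ => vol₊) ≤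
      ENNReal.ofReal (((1 - r) * (16 * Real.pi ^ 2 / 27) + 4 * r) / k ^ 2) := by
  refine (lintegral_mono fun w =>
    ENNReal.ofReal_le_ofReal (exp_neg_mul_add_mul_le hk hr0 hr1 _ _ _ _)).trans_eq ?_
  have h1r : 0 ≤ 1 - r := sub_nonneg.2 hr1
  simp only [ENNReal.ofReal_add (mul_nonneg h1r (Real.exp_nonneg _))
    (mul_nonneg hr0 (Real.exp_nonneg _)), ENNReal.ofReal_mul h1r, ENNReal.ofReal_mul hr0]
  rw [lintegral_add_left (by fun_prop), lintegral_const_mul _ (by fun_prop),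
    lintegral_const_mul _ (by fun_prop), lintegral_exp_neg_cols hk,
    lintegral_exp_neg_rows (half_pos hk), ← ENNReal.ofReal_mul h1r, ← ENNReal.ofReal_mul hr0,
    ← ENNReal.ofReal_add (by positivity) (by positivity)]
  congr 1
  field_simp
  ring

lemma one_add_mul_add_div_pi_sq_le {r : ℝ} (hr0 : 0 ≤ r) (hr1 : r ≤ 1) :
    (1 + r) * ((1 - r) / 9 + 3 * r / (4 * Real.pi ^ 2)) ≤ 1 / 6 := by
  grw [← Real.pi_gt_three]
  nlinarith

lemma gaussianMatrix_forall_pos_pos_le {α β : Type*} [Fintype α] [Fintype β]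
    {C : Matrix (Fin 2) α ℝ} (hC : C * Cᵀ = !![2, 1; 1, 2]) {x y : β → ℝ} (hx : x ⬝ᵥ x = 1)
    (hy : y ⬝ᵥ y = 1) (hxy : x ⬝ᵥ y ∈ Set.Ioc (-1) 0) :
    gaussianMatrix α β {a | ∀ s, 0 < C s ⬝ᵥ Matrix.of a *ᵥ x ∧ 0 < C s ⬝ᵥ Matrix.of a *ᵥ y} ≤
      ENNReal.ofReal ((1 + x ⬝ᵥ y) / 6) := by
  set ρ := x ⬝ᵥ y with hρ
  have hs : 0 < 1 - ρ ^ 2 := by nlinarith [hxy.1, hxy.2]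
  have hdet : (C * Cᵀ).det = 3 := by rw [hC, Matrix.det_fin_two_of]; norm_num
  have hinv : (C * Cᵀ)⁻¹ = (3 : ℝ)⁻¹ • !![2, -1; -1, 2] := by
    rw [Matrix.inv_def, hdet, Ring.inverse_eq_inv', hC, Matrix.adjugate_fin_two_of]
  have hform : ∀ w : Fin 2 → Fin 2 → ℝ, (1 - ρ ^ 2)⁻¹ * ∑ s, ∑ t, (C * Cᵀ)⁻¹ s t *
      (w s ⬝ᵥ !![1, -ρ; -ρ, 1] *ᵥ w t) =
        2 / (3 * (1 - ρ ^ 2)) *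
          ((w 0 0 ^ 2 - w 0 0 * w 1 0 + w 1 0 ^ 2) + (w 0 1 ^ 2 - w 0 1 * w 1 1 + w 1 1 ^ 2) +
            -ρ * (2 * (w 0 0 * w 0 1) - (w 0 0 * w 1 1 + w 0 1 * w 1 0) + 2 * (w 1 0 * w 1 1))) :=
      fun w => by
    simp only [hinv, dotProduct_correlation_mulVec, Fin.sum_univ_two, Matrix.smul_apply,
      smul_eq_mul, Matrix.of_apply, Matrix.cons_val_zero, Matrix.cons_val_one]
    field_simp
    ring
  rw [gaussianMatrix_forall_pos_pos (by rw [hdet]; norm_num) hx hy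
    ⟨hxy.1, hxy.2.trans_lt one_pos⟩, hdet]
  simp only [← hρ, hform, neg_div]
  grw [lintegral_exp_neg_add_mul_le (by positivity) (neg_nonneg.2 hxy.2) (by linarith [hxy.1])]
  rw [← ENNReal.ofReal_mul (by positivity)]
  refine ENNReal.ofReal_le_ofReal ?_
  have hbound := one_add_mul_add_div_pi_sq_le (neg_nonneg.2 hxy.2) (neg_le.1 hxy.1.le)
  rw [Fintype.card_fin, Real.sqrt_sq hs.le, abs_of_pos three_pos]
  calc _ = (1 + ρ) * ((1 + -ρ) * ((1 - -ρ) / 9 + 3 * -ρ / (4 * Real.pi ^ 2))) := by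
        field_simp
        ring
    _ ≤ (1 + ρ) * (1 / 6) := mul_le_mul_of_nonneg_left hbound (by linarith [hxy.1])
    _ = (1 + ρ) / 6 := by ring

end DoubleWin

section Ties

variable {α β : Type*} [Fintype α] [Fintype β]

lemma ae_dotProduct_ne_zero {v : α → ℝ} (hv : v ≠ 0) :
    ∀ᵐ w ∂Measure.pi fun _ : α => gaussianReal 0 1, v ⬝ᵥ w ≠ 0 := by
  have hker : LinearMap.ker (dotProductBilin ℝ ℝ v) ≠ ⊤ := fun h =>
    hv (dotProduct_self_eq_zero.1 (LinearMap.mem_ker.1 (h ▸ Submodule.mem_top : v ∈ _)))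
  rw [pi_gaussianReal_eq_withDensity]
  exact (withDensity_absolutelyContinuous _ _).ae_le
    (measure_eq_zero_iff_ae_notMem.1 (Measure.addHaar_submodule volume _ hker))

lemma ae_dotProduct_mulVec_ne_zero {c : α → ℝ} (hc : c ≠ 0) {x : β → ℝ} (hx : x ≠ 0) :
    ∀ᵐ a ∂gaussianMatrix α β, c ⬝ᵥ Matrix.of a *ᵥ x ≠ 0 := by
  obtain ⟨i, hi⟩ := Function.ne_iff.1 hc
  obtain ⟨j, hj⟩ := Function.ne_iff.1 hx
  have hv : (fun s : α × β => c s.1 * x s.2) ≠ 0 :=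
    Function.ne_iff.2 ⟨(i, j), mul_ne_zero hi hj⟩
  filter_upwards
    [(measurePreserving_uncurry _).quasiMeasurePreserving.ae (ae_dotProduct_ne_zero hv)] with a ha
  convert ha
  simp only [dotProduct, Matrix.mulVec, Fintype.sum_prod_type, Finset.mul_sum, mul_assoc,
    mul_comm (x _), Function.uncurry, Matrix.of_apply]

lemma ae_injective_mulVec {x : β → ℝ} (hx : x ≠ 0) :
    ∀ᵐ a ∂gaussianMatrix α β, Function.Injective (Matrix.of a *ᵥ x) := by
  classical
  have hpair : ∀ i j, i ≠ j →
      ∀ᵐ a ∂gaussianMatrix α β, (Matrix.of a *ᵥ x) i ≠ (Matrix.of a *ᵥ x) j := fun i j hij => by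
    have hc : Pi.single i 1 - Pi.single j 1 ≠ (0 : α → ℝ) := fun h => by
      simpa [hij] using congrFun h i
    filter_upwards [ae_dotProduct_mulVec_ne_zero hc hx] with a ha
    simpa [sub_dotProduct, sub_eq_zero] using ha
  filter_upwards [ae_all_iff.2 fun i => ae_all_iff.2 fun j =>
    Filter.eventually_imp_distrib_left.2 (hpair i j)] with a ha i j
  exact not_imp_not.1 (ha i j)

end Ties

section StrictArgmax

variable {ι : Type*}

/-- `i` is the unique index at which `p` is maximal; unique minimizers are `IsStrictArgmax (-p)`. -/
def IsStrictArgmax (p : ι → ℝ) (i : ι) : Prop := ∀ k, k ≠ i → p k < p i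

/-- The strict maximizing indices of `p` and `q` exist and differ. -/
def ArgmaxDiffer (p q : ι → ℝ) : Prop :=
  ∃ i j, i ≠ j ∧ IsStrictArgmax p i ∧ IsStrictArgmax q j

lemma not_isStrictArgmax_neg [Nontrivial ι] {p : ι → ℝ} {i : ι} (h : IsStrictArgmax p i) :
    ¬IsStrictArgmax (-p) i := fun hneg =>
  have ⟨k, hk⟩ := exists_ne i
  (h k hk).asymm (neg_lt_neg_iff.1 (hneg k hk))

lemma exists_isStrictArgmax [Finite ι] [Nonempty ι] {p : ι → ℝ}
    (hp : Function.Injective p) : ∃ i, IsStrictArgmax p i := by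
  obtain ⟨i, hi⟩ := Finite.exists_max p
  exact ⟨i, fun k hk => (hi k).lt_of_ne (hp.ne hk)⟩

lemma exists_common_isStrictArgmax [Finite ι] [Nonempty ι] {p q : ι → ℝ}
    (hp : Function.Injective p) (hq : Function.Injective q) (h : ¬ArgmaxDiffer p q) :
    ∃ i, IsStrictArgmax p i ∧ IsStrictArgmax q i := by
  obtain ⟨i, hi⟩ := exists_isStrictArgmax hp
  obtain ⟨j, hj⟩ := exists_isStrictArgmax hq
  obtain rfl : i = j := by_contra fun hij => h ⟨i, j, hij, hi, hj⟩
  exact ⟨i, hi, hj⟩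

/-- The ordered pairs of indices whose order under `p` is reversed by `q`. -/
noncomputable def inversions [Fintype ι] (p q : ι → ℝ) : Finset (ι × ι) :=
  Finset.univ.filter fun s => p s.1 < p s.2 ∧ q s.2 < q s.1

lemma mem_inversions [Fintype ι] {p q : ι → ℝ} {s : ι × ι} :
    s ∈ inversions p q ↔ p s.1 < p s.2 ∧ q s.2 < q s.1 := by
  simp only [inversions, Finset.mem_filter, Finset.mem_univ, true_and]

-- Modulo 3, the sum of two distinct indices determines the third one, hence the unordered pair.
lemma injOn_add_inversions (p q : Fin 3 → ℝ) :
    Set.InjOn (fun s : Fin 3 × Fin 3 => s.1 + s.2) (inversions p q) := by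
  have hpair : ∀ i j k l : Fin 3, i ≠ j → k ≠ l → i + j = k + l →
      (i, j) = (k, l) ∨ (i, j) = (l, k) := by decide
  rintro ⟨i, j⟩ hs ⟨k, l⟩ ht hsum
  rw [Finset.mem_coe, mem_inversions] at hs ht
  refine (hpair i j k l (ne_of_apply_ne p hs.1.ne) (ne_of_apply_ne p ht.1.ne) hsum).resolve_right
    fun h => ?_
  obtain ⟨rfl, rfl⟩ := Prod.mk.inj h
  exact hs.1.asymm ht.1

lemma card_inversions_le_three (p q : Fin 3 → ℝ) : (inversions p q).card ≤ 3 :=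
  Finset.card_le_card_of_injOn _ (fun _ _ => Finset.mem_univ _) (injOn_add_inversions p q)

lemma IsStrictArgmax.add_eq_neg {p q : Fin 3 → ℝ} {i : Fin 3} (hp : IsStrictArgmax p i)
    (hq : IsStrictArgmax q i) {s : Fin 3 × Fin 3} (hs : s ∈ inversions p q) : s.1 + s.2 = -i := by
  have hthird : ∀ i j k : Fin 3, j ≠ i → k ≠ i → j ≠ k → j + k = -i := by decide
  obtain ⟨hps, hqs⟩ := mem_inversions.1 hs
  refine hthird i _ _ (fun h => ?_) (fun h => ?_) (ne_of_apply_ne p hps.ne)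
  · exact hps.asymm (h ▸ hp _ (h ▸ ne_of_apply_ne p hps.ne'))
  · exact hqs.asymm (h ▸ hq _ (h ▸ ne_of_apply_ne q hqs.ne'))

lemma mem_inversions_neg [Fintype ι] {p q : ι → ℝ} {s : ι × ι} :
    s.swap ∈ inversions (-p) (-q) ↔ s ∈ inversions p q := by
  simp [mem_inversions]

lemma card_inversions_le_one {p q : Fin 3 → ℝ} {i : Fin 3}
    (h : ∀ s ∈ inversions p q, s.1 + s.2 = i) : (inversions p q).card ≤ 1 :=
  Finset.card_le_one.2 fun s hs t ht =>
    injOn_add_inversions p q hs ht ((h s hs).trans (h t ht).symm)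

open Classical in
lemma two_mul_card_inversions_le {p q : Fin 3 → ℝ} (hp : Function.Injective p)
    (hq : Function.Injective q) :
    2 * (inversions p q).card ≤
      3 * ((if ArgmaxDiffer p q then 1 else 0) + if ArgmaxDiffer (-p) (-q) then 1 else 0) := by
  have hmax : ¬ArgmaxDiffer p q →
      ∃ i, IsStrictArgmax p i ∧ ∀ s ∈ inversions p q, s.1 + s.2 = -i := fun h =>
    have ⟨i, hpi, hqi⟩ := exists_common_isStrictArgmax hp hq h
    ⟨i, hpi, fun _ => hpi.add_eq_neg hqi⟩
  have hmin : ¬ArgmaxDiffer (-p) (-q) →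
      ∃ i, IsStrictArgmax (-p) i ∧ ∀ s ∈ inversions p q, s.1 + s.2 = -i := fun h =>
    have ⟨i, hpi, hqi⟩ :=
      exists_common_isStrictArgmax (neg_injective.comp hp) (neg_injective.comp hq) h
    ⟨i, hpi, fun _ hs => (add_comm _ _).trans (hpi.add_eq_neg hqi (mem_inversions_neg.2 hs))⟩
  split_ifs with hD hD' hD'
  · linarith [card_inversions_le_three p q]
  · obtain ⟨i, -, hi⟩ := hmin hD'
    linarith [card_inversions_le_one hi]
  · obtain ⟨i, -, hi⟩ := hmax hD
    linarith [card_inversions_le_one hi]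
  · obtain ⟨i, hpi, hi⟩ := hmax hD
    obtain ⟨j, hpj, hj⟩ := hmin hD'
    have hempty : inversions p q = ∅ := Finset.eq_empty_of_forall_notMem fun s hs => by
      obtain rfl : i = j := neg_injective ((hi s hs).symm.trans (hj s hs))
      exact not_isStrictArgmax_neg hpi hpj
    simp [hempty]

/-- The matrix sending `p` to the differences `p i - p k` over the two indices `k ≠ i`. -/
def contrastMatrix (i : Fin 3) : Matrix (Fin 2) (Fin 3) ℝ :=
  Matrix.of fun s => Pi.single i 1 - Pi.single (i + ![1, 2] s) 1

lemma contrastMatrix_dotProduct (i : Fin 3) (s : Fin 2) (p : Fin 3 → ℝ) :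
    contrastMatrix i s ⬝ᵥ p = p i - p (i + ![1, 2] s) := by
  change (Pi.single i 1 - Pi.single (i + ![1, 2] s) 1) ⬝ᵥ p = _
  rw [sub_dotProduct, single_one_dotProduct, single_one_dotProduct]

lemma contrastMatrix_mul_transpose (i : Fin 3) :
    contrastMatrix i * (contrastMatrix i)ᵀ = !![2, 1; 1, 2] := by
  ext s t
  rw [Matrix.mul_apply', contrastMatrix_dotProduct]
  fin_cases i <;> fin_cases s <;> fin_cases t <;>
    norm_num [contrastMatrix, Pi.single_apply, Fin.ext_iff]

lemma isStrictArgmax_iff_forall_contrastMatrix_pos {p : Fin 3 → ℝ} {i : Fin 3} :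
    IsStrictArgmax p i ↔ ∀ s, 0 < contrastMatrix i s ⬝ᵥ p := by
  have hne : ∀ (i : Fin 3) (s : Fin 2), i + ![1, 2] s ≠ i := by decide
  have hex : ∀ i k : Fin 3, k ≠ i → ∃ s : Fin 2, i + ![1, 2] s = k := by decide
  simp only [contrastMatrix_dotProduct, sub_pos]
  refine ⟨fun h s => h _ (hne i s), fun h k hk => ?_⟩
  obtain ⟨s, rfl⟩ := hex i k hk
  exact h s

end StrictArgmax

section UnitVectors

variable {β : Type*} [Fintype β]

lemma ne_zero_of_dotProduct_self_eq_one {x : β → ℝ} (hx : x ⬝ᵥ x = 1) : x ≠ 0 :=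
  dotProduct_self_eq_zero.not.1 (hx ▸ one_ne_zero)

lemma neg_one_le_dotProduct {x y : β → ℝ} (hx : x ⬝ᵥ x = 1) (hy : y ⬝ᵥ y = 1) :
    -1 ≤ x ⬝ᵥ y := by
  have h : 0 ≤ (x + y) ⬝ᵥ (x + y) := Finset.sum_nonneg fun j _ => mul_self_nonneg _
  rw [add_dotProduct, dotProduct_add, dotProduct_add, dotProduct_comm y x, hx, hy] at h
  linarith

lemma eq_neg_of_dotProduct_eq_neg_one {x y : β → ℝ} (hx : x ⬝ᵥ x = 1) (hy : y ⬝ᵥ y = 1)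
    (hxy : x ⬝ᵥ y = -1) : y = -x := by
  refine eq_neg_of_add_eq_zero_right (dotProduct_self_eq_zero.1 ?_)
  rw [add_dotProduct, dotProduct_add, dotProduct_add, dotProduct_comm y x, hx, hy, hxy]
  norm_num

end UnitVectors

section ArgmaxProbability

variable {β : Type*} [Fintype β]

lemma gaussianMatrix_argmaxDiffer_neg {α : Type*} [Fintype α] (x y : β → ℝ) :
    gaussianMatrix α β {a | ArgmaxDiffer (-(Matrix.of a *ᵥ x)) (-(Matrix.of a *ᵥ y))} =
      gaussianMatrix α β {a | ArgmaxDiffer (Matrix.of a *ᵥ x) (Matrix.of a *ᵥ y)} := by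
  have hneg : MeasurePreserving (fun z : ℝ => -z) (gaussianReal 0 1) (gaussianReal 0 1) :=
    ⟨measurable_neg, by rw [gaussianReal_map_neg, neg_zero]⟩
  have hmp : MeasurePreserving (MeasurableEquiv.neg (α → β → ℝ)) (gaussianMatrix α β)
      (gaussianMatrix α β) :=
    measurePreserving_pi _ _ fun _ => measurePreserving_pi _ _ fun _ => hneg
  rw [← hmp.measure_preimage_equiv]
  congr! 1
  ext a
  change ArgmaxDiffer (-((-Matrix.of a) *ᵥ x)) (-((-Matrix.of a) *ᵥ y)) ↔ _
  simp only [Matrix.neg_mulVec, neg_neg, Set.mem_ofPred_eq]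

lemma measurableSet_mulVec_lt {α : Type*} (x : β → ℝ) (i j : α) :
    MeasurableSet {a : α → β → ℝ | (Matrix.of a *ᵥ x) i < (Matrix.of a *ᵥ x) j} := by
  unfold Matrix.mulVec dotProduct
  simp only [Matrix.of_apply]
  exact measurableSet_lt (by fun_prop) (by fun_prop)

lemma measurableSet_argmaxDiffer_mulVec {α : Type*} [Countable α] (x y : β → ℝ) :
    MeasurableSet {a : α → β → ℝ | ArgmaxDiffer (Matrix.of a *ᵥ x) (Matrix.of a *ᵥ y)} := by
  have hmax : ∀ (x : β → ℝ) (i : α),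
      MeasurableSet {a : α → β → ℝ | IsStrictArgmax (Matrix.of a *ᵥ x) i} := fun x i => by
    simp only [IsStrictArgmax, Set.ofPred_forall]
    exact .iInter fun k => .iInter fun _ => measurableSet_mulVec_lt x k i
  simp only [ArgmaxDiffer, Set.ofPred_exists]
  exact .iUnion fun i => .iUnion fun j =>
    (MeasurableSet.const _).inter ((hmax x i).inter (hmax y j))

lemma gaussianMatrix_mem_inversions {x y : β → ℝ} (hx : x ⬝ᵥ x = 1) (hy : y ⬝ᵥ y = 1)
    (hxy : x ⬝ᵥ y ∈ Set.Ioo (-1) 1) {s : Fin 3 × Fin 3} (hs : s.1 ≠ s.2) :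
    gaussianMatrix (Fin 3) β {a | s ∈ inversions (Matrix.of a *ᵥ x) (Matrix.of a *ᵥ y)} =
      ENNReal.ofReal (Real.arccos (x ⬝ᵥ y) / (2 * Real.pi)) := by
  have hc : Pi.single s.2 1 - Pi.single s.1 1 ≠ (0 : Fin 3 → ℝ) := fun h => by
    simpa [hs] using congrFun h s.1
  have h := gaussianMatrix_pos_pos (α := Fin 3) hc hx (y := -y) (by simpa using hy)
    (by rw [dotProduct_neg]; exact ⟨neg_lt_neg hxy.2, neg_lt.1 hxy.1⟩)
  simpa [mem_inversions, sub_dotProduct, Matrix.mulVec_neg] using h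

lemma sum_gaussianMatrix_mem_inversions_le {x y : β → ℝ} (hx : x ≠ 0) (hy : y ≠ 0) :
    ∑ s, gaussianMatrix (Fin 3) β {a | s ∈ inversions (Matrix.of a *ᵥ x) (Matrix.of a *ᵥ y)} ≤
      3 * gaussianMatrix (Fin 3) β {a | ArgmaxDiffer (Matrix.of a *ᵥ x) (Matrix.of a *ᵥ y)} := by
  classical
  set μ := gaussianMatrix (Fin 3) β
  set E : Fin 3 × Fin 3 → Set (Fin 3 → β → ℝ) :=
    fun s => {a | s ∈ inversions (Matrix.of a *ᵥ x) (Matrix.of a *ᵥ y)}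
  set D : Set (Fin 3 → β → ℝ) := {a | ArgmaxDiffer (Matrix.of a *ᵥ x) (Matrix.of a *ᵥ y)}
  set D' : Set (Fin 3 → β → ℝ) := {a | ArgmaxDiffer (-(Matrix.of a *ᵥ x)) (-(Matrix.of a *ᵥ y))}
  have hE : ∀ s, MeasurableSet (E s) := fun s => by
    simp only [E, mem_inversions]
    exact (measurableSet_mulVec_lt x _ _).inter (measurableSet_mulVec_lt y _ _)
  have hD : MeasurableSet D := measurableSet_argmaxDiffer_mulVec x y
  have hcount : ∀ᵐ a ∂μ, 2 * ∑ s, (E s).indicator 1 a ≤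
      3 * (D.indicator 1 a + D'.indicator (1 : (Fin 3 → β → ℝ) → ENNReal) a) := by
    filter_upwards [ae_injective_mulVec hx, ae_injective_mulVec hy] with a hpa hqa
    simp only [E, D, D', Set.indicator_apply, Set.mem_ofPred_eq, Pi.one_apply, Finset.sum_boole,
      Finset.filter_univ_mem]
    exact_mod_cast two_mul_card_inversions_le hpa hqa
  have hint := lintegral_mono_ae hcount
  rw [lintegral_const_mul' _ _ (by simp), lintegral_const_mul' _ _ (by simp),
    lintegral_add_left (measurable_one.indicator hD),
    lintegral_finsetSum _ fun s _ => measurable_one.indicator (hE s)] at hint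
  refine (ENNReal.mul_le_mul_iff_right (a := 2) (by simp) (by simp)).1 ?_
  calc 2 * ∑ s, μ (E s) ≤ 3 * (μ D + μ D') := by
        grw [← lintegral_indicator_one_le D']
        simpa only [lintegral_indicator_one (hE _), lintegral_indicator_one hD] using hint
    _ = 2 * (3 * μ D) := by
        rw [gaussianMatrix_argmaxDiffer_neg]
        ring

lemma arccos_div_pi_le_gaussianMatrix_argmaxDiffer {x y : β → ℝ} (hx : x ⬝ᵥ x = 1)
    (hy : y ⬝ᵥ y = 1) (hxy : x ⬝ᵥ y ∈ Set.Ioo (-1) 1) :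
    ENNReal.ofReal (Real.arccos (x ⬝ᵥ y) / Real.pi) ≤
      gaussianMatrix (Fin 3) β {a | ArgmaxDiffer (Matrix.of a *ᵥ x) (Matrix.of a *ᵥ y)} := by
  have hsum := sum_gaussianMatrix_mem_inversions_le
    (ne_zero_of_dotProduct_self_eq_one hx) (ne_zero_of_dotProduct_self_eq_one hy)
  grw [← Finset.subset_univ Finset.univ.offDiag, Finset.sum_congr rfl fun s hs =>
    gaussianMatrix_mem_inversions hx hy hxy (Finset.mem_offDiag.1 hs).2.2, Finset.sum_const] at hsum
  refine (ENNReal.mul_le_mul_iff_right (a := 3) (by simp) (by simp)).1 (le_trans ?_ hsum)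
  rw [Finset.offDiag_card, Finset.card_univ, Fintype.card_fin, ← ENNReal.ofReal_nsmul,
    ← ENNReal.ofReal_ofNat 3, ← ENNReal.ofReal_mul three_pos.le]
  refine ENNReal.ofReal_le_ofReal (le_of_eq ?_)
  norm_num
  ring

lemma one_sub_div_two_le_arccos_div_pi {r : ℝ} (hr0 : 0 ≤ r) (hr1 : r ≤ 1) :
    (1 - r) / 2 ≤ Real.arccos r / Real.pi := by
  have h := Real.one_sub_mul_le_cos (Real.arccos_nonneg r) (Real.arccos_le_pi_div_two.2 hr0)
  rw [Real.cos_arccos (by linarith) hr1] at h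
  rw [div_le_iff₀ two_pos]
  linarith [div_mul_eq_mul_div 2 Real.pi (Real.arccos r), mul_div_assoc 2 (Real.arccos r) Real.pi]

lemma gaussianMatrix_isStrictArgmax_le {x y : β → ℝ} (hx : x ⬝ᵥ x = 1) (hy : y ⬝ᵥ y = 1)
    (hxy : x ⬝ᵥ y ∈ Set.Icc (-1) 0) (i : Fin 3) :
    gaussianMatrix (Fin 3) β
        {a | IsStrictArgmax (Matrix.of a *ᵥ x) i ∧ IsStrictArgmax (Matrix.of a *ᵥ y) i} ≤
      ENNReal.ofReal ((1 + x ⬝ᵥ y) / 6) := by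
  obtain hxy1 | hxy1 := hxy.1.eq_or_lt
  · have hempty : {a : Fin 3 → β → ℝ | IsStrictArgmax (Matrix.of a *ᵥ x) i ∧
        IsStrictArgmax (Matrix.of a *ᵥ y) i} = ∅ := Set.eq_empty_of_forall_notMem fun a ha => by
      rw [eq_neg_of_dotProduct_eq_neg_one hx hy hxy1.symm, Set.mem_ofPred_eq,
        Matrix.mulVec_neg] at ha
      exact not_isStrictArgmax_neg ha.1 ha.2
    simp [hempty]
  · simp only [isStrictArgmax_iff_forall_contrastMatrix_pos, ← forall_and]
    exact gaussianMatrix_forall_pos_pos_le (contrastMatrix_mul_transpose i) hx hy ⟨hxy1, hxy.2⟩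

lemma one_sub_three_mul_le_gaussianMatrix_argmaxDiffer {x y : β → ℝ} (hx : x ≠ 0) (hy : y ≠ 0)
    {p : ℝ} (hp : 0 ≤ p)
    (h : ∀ i, gaussianMatrix (Fin 3) β
        {a | IsStrictArgmax (Matrix.of a *ᵥ x) i ∧ IsStrictArgmax (Matrix.of a *ᵥ y) i} ≤
      ENNReal.ofReal p) :
    ENNReal.ofReal (1 - 3 * p) ≤
      gaussianMatrix (Fin 3) β {a | ArgmaxDiffer (Matrix.of a *ᵥ x) (Matrix.of a *ᵥ y)} := by
  rw [ENNReal.ofReal_sub _ (by positivity), ENNReal.ofReal_one, tsub_le_iff_right]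
  calc 1 = gaussianMatrix (Fin 3) β Set.univ := measure_univ.symm
    _ ≤ gaussianMatrix (Fin 3) β ({a | ArgmaxDiffer (Matrix.of a *ᵥ x) (Matrix.of a *ᵥ y)} ∪ ⋃ i,
          {a | IsStrictArgmax (Matrix.of a *ᵥ x) i ∧ IsStrictArgmax (Matrix.of a *ᵥ y) i}) := by
        refine measure_mono_ae ?_
        filter_upwards [ae_injective_mulVec hx, ae_injective_mulVec hy] with a hpa hqa _
        exact or_iff_not_imp_left.2 fun hD =>
          Set.mem_iUnion.2 (exists_common_isStrictArgmax hpa hqa hD)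
    _ ≤ _ := by
        grw [measure_union_le, measure_iUnion_fintype_le, Finset.sum_le_sum fun i _ => h i]
        simp [ENNReal.ofReal_mul]

end ArgmaxProbability

/-- For unit vectors `x, y ∈ ℝⁿ` and independent standard Gaussian vectors
`a 0, a 1, a 2` in `ℝⁿ`, the probability that the (strict) maximizing indices of
`i ↦ (a i)·x` and `j ↦ (a j)·y` differ is at least `(1 − x·y)/2`. -/
theorem stmt_16 (n : ℕ) (x y : Fin n → ℝ)
    (hx : ∑ t, x t ^ 2 = 1) (hy : ∑ t, y t ^ 2 = 1) :
    ENNReal.ofReal ((1 - ∑ t, x t * y t) / 2) ≤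
      (Measure.pi fun _ : Fin 3 => Measure.pi fun _ : Fin n => gaussianReal 0 1)
        {a : Fin 3 → Fin n → ℝ | ∃ i j : Fin 3, i ≠ j ∧
          (∀ k, k ≠ i → (∑ t, a k t * x t) < ∑ t, a i t * x t) ∧
          (∀ k, k ≠ j → (∑ t, a k t * y t) < ∑ t, a j t * y t)} := by
  have hx1 : x ⬝ᵥ x = 1 := by simpa only [dotProduct, sq] using hx
  have hy1 : y ⬝ᵥ y = 1 := by simpa only [dotProduct, sq] using hy
  change ENNReal.ofReal ((1 - x ⬝ᵥ y) / 2) ≤ gaussianMatrix (Fin 3) (Fin n)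
    {a | ArgmaxDiffer (Matrix.of a *ᵥ x) (Matrix.of a *ᵥ y)}
  obtain hneg | hpos := le_total (x ⬝ᵥ y) 0
  · have hge := neg_one_le_dotProduct hx1 hy1
    rw [show (1 - x ⬝ᵥ y) / 2 = 1 - 3 * ((1 + x ⬝ᵥ y) / 6) by ring]
    exact one_sub_three_mul_le_gaussianMatrix_argmaxDiffer (ne_zero_of_dotProduct_self_eq_one hx1)
      (ne_zero_of_dotProduct_self_eq_one hy1) (by linarith)
      (gaussianMatrix_isStrictArgmax_le hx1 hy1 ⟨hge, hneg⟩)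
  obtain hge | hlt := le_or_gt 1 (x ⬝ᵥ y)
  · rw [ENNReal.ofReal_of_nonpos (by linarith)]
    exact zero_le
  · exact (ENNReal.ofReal_le_ofReal (one_sub_div_two_le_arccos_div_pi hpos hlt.le)).trans
      (arccos_div_pi_le_gaussianMatrix_argmaxDiffer hx1 hy1 ⟨by linarith, hlt⟩)
end
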